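/- arXiv:2512.01172 — 6 statements merged into one kernel-verified Lean document; each statement's English description precedes it below -/
import Mathlib

section
/- Under the Lagrangian flow data assumptions, fix t ∈ [0,1] with ∫ ‖V(x,t)‖² dμ(x) < ∞. Then there exists a measurable vector field v_t : ℝ^d → ℝ^d with ∫ ‖v_t(y)‖² dρ_t(y) ≤ ∫ ‖V(x,t)‖² dμ(x) such that for every measurable ψ : ℝ^d → ℝ^d with ∫ ‖ψ‖² dρ_t < ∞ one has ∫_{ℝ^d} ⟨ψ(y), v_t(y)⟩ dρ_t(y) = ∫_{ℝ^d} ⟨ψ(X_t(x)), V(x,t)⟩ dμ(x); moreover, any two such vector fields agree ρ_t-almost everywhere. -/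
open MeasureTheory Set
open scoped RealInnerProductSpace

open scoped InnerProductSpace

/-!
Composition with `X_t` is a linear isometry `L²(ρ_t) → L²(μ)`, and `v_t` is the image of `V(·, t)`
under its adjoint: the matching identity is the defining property of the adjoint, the energy bound
says that the adjoint of an isometry is a contraction, and uniqueness holds because a vector of
`L²(ρ_t)` is determined by its inner products.
-/

section L2

variable {α 𝕜 E : Type*} [RCLike 𝕜] {mα : MeasurableSpace α} {μ : Measure α}
  [NormedAddCommGroup E]

theorem norm_toLp_two_sq {f : α → E} (hf : MemLp f 2 μ) :
    ‖hf.toLp f‖ ^ 2 = ∫ x, ‖f x‖ ^ 2 ∂μ := by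
  have hnonneg : 0 ≤ ∫ x, ‖f x‖ ^ 2 ∂μ := integral_nonneg fun x => sq_nonneg ‖f x‖
  rw [Lp.norm_toLp, hf.eLpNorm_eq_integral_rpow_norm two_ne_zero ENNReal.ofNat_ne_top]
  simp only [ENNReal.toReal_ofNat, Real.rpow_two]
  rw [ENNReal.toReal_ofReal (Real.rpow_nonneg hnonneg _), ← Real.rpow_two,
    Real.rpow_inv_rpow hnonneg two_ne_zero]

theorem inner_toLp_toLp [InnerProductSpace 𝕜 E] {f g : α → E}
    (hf : MemLp f 2 μ) (hg : MemLp g 2 μ) :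
    ⟪hf.toLp f, hg.toLp g⟫_𝕜 = ∫ x, ⟪f x, g x⟫_𝕜 ∂μ := by
  rw [L2.inner_def]
  refine integral_congr_ae ?_
  filter_upwards [hf.coeFn_toLp, hg.coeFn_toLp] with x hfx hgx
  rw [hfx, hgx]

end L2

section Transfer

variable {α β E : Type*} (𝕜 : Type*) [RCLike 𝕜] {mα : MeasurableSpace α} {mβ : MeasurableSpace β}
  {μ : Measure α} {ρ : Measure β} {Y : α → β} [NormedAddCommGroup E] [InnerProductSpace 𝕜 E]

/-- The `L²` transfer (Perron–Frobenius) operator of a measure-preserving map `Y`, encoded as the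
adjoint of the composition operator `ψ ↦ ψ ∘ Y`. It sends the particle velocity `V(·, t)` to the
flow-matched field; for a probability measure it is `U ↦ 𝔼[U | Y = ·]`. -/
noncomputable def transferL2 [CompleteSpace E] (hY : MeasurePreserving Y μ ρ) :
    Lp E 2 μ →L[𝕜] Lp E 2 ρ :=
  ContinuousLinearMap.adjoint (Lp.compMeasurePreservingₗᵢ 𝕜 Y hY).toContinuousLinearMap

theorem norm_transferL2_apply_le [CompleteSpace E] (hY : MeasurePreserving Y μ ρ)
    (u : Lp E 2 μ) : ‖transferL2 𝕜 hY u‖ ≤ ‖u‖ := by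
  have hnorm : ‖transferL2 (E := E) 𝕜 hY‖ ≤ 1 :=
    (LinearIsometryEquiv.norm_map _ _).trans_le (LinearIsometry.norm_toContinuousLinearMap_le _)
  exact (ContinuousLinearMap.le_of_opNorm_le _ hnorm u).trans_eq (one_mul _)

theorem integral_norm_sq_transferL2_le [CompleteSpace E] (hY : MeasurePreserving Y μ ρ)
    {U : α → E} (hU : MemLp U 2 μ) :
    ∫ y, ‖transferL2 𝕜 hY (hU.toLp U) y‖ ^ 2 ∂ρ ≤ ∫ x, ‖U x‖ ^ 2 ∂μ := by
  rw [← norm_toLp_two_sq (Lp.memLp _), ← norm_toLp_two_sq hU, Lp.toLp_coeFn]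
  gcongr
  exact norm_transferL2_apply_le 𝕜 hY _

theorem integral_inner_transferL2 [CompleteSpace E] (hY : MeasurePreserving Y μ ρ)
    {ψ : β → E} (hψ : MemLp ψ 2 ρ) {U : α → E} (hU : MemLp U 2 μ) :
    ∫ y, ⟪ψ y, transferL2 𝕜 hY (hU.toLp U) y⟫_𝕜 ∂ρ = ∫ x, ⟪ψ (Y x), U x⟫_𝕜 ∂μ :=
  calc ∫ y, ⟪ψ y, transferL2 𝕜 hY (hU.toLp U) y⟫_𝕜 ∂ρ
    _ = ⟪hψ.toLp ψ, transferL2 𝕜 hY (hU.toLp U)⟫_𝕜 := by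
        rw [← inner_toLp_toLp hψ (Lp.memLp _), Lp.toLp_coeFn]
    _ = ⟪Lp.compMeasurePreserving Y hY (hψ.toLp ψ), hU.toLp U⟫_𝕜 :=
        ContinuousLinearMap.adjoint_inner_right _ _ _
    _ = ∫ x, ⟪ψ (Y x), U x⟫_𝕜 ∂μ := by
        rw [Lp.toLp_compMeasurePreserving]
        exact inner_toLp_toLp (hψ.comp_measurePreserving hY) hU

end Transfer

section MatchedField

variable {α β E : Type*} (𝕜 : Type*) [RCLike 𝕜] {mα : MeasurableSpace α} {mβ : MeasurableSpace β}
  {μ : Measure α} {ρ : Measure β} {Y : α → β} {U : α → E}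
  [NormedAddCommGroup E] [InnerProductSpace 𝕜 E] [MeasurableSpace E]

/-- The flow-matching identity: the field `v` on the target of `Y` has the same pairing with every
`ψ ∈ L²(ρ)` as the velocity `U` has with `ψ ∘ Y`. The test fields are genuine functions, which are
required to be measurable, rather than classes in `Lp`. -/
def IsMatchedField (μ : Measure α) (ρ : Measure β) (Y : α → β) (U : α → E) (v : β → E) : Prop :=
  ∀ ψ : β → E, Measurable ψ → Integrable (fun y => ‖ψ y‖ ^ 2) ρ →
    ∫ y, ⟪ψ y, v y⟫_𝕜 ∂ρ = ∫ x, ⟪ψ (Y x), U x⟫_𝕜 ∂μ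

variable {𝕜} in
theorem IsMatchedField.ae_eq [BorelSpace E] {v w : β → E}
    (hw : IsMatchedField 𝕜 μ ρ Y U w) (hv : IsMatchedField 𝕜 μ ρ Y U v)
    (hwL2 : MemLp w 2 ρ) (hvL2 : MemLp v 2 ρ) : w =ᵐ[ρ] v := by
  rw [← MemLp.toLp_eq_toLp_iff hwL2 hvL2]
  refine ext_inner_left 𝕜 fun ψ => ?_
  have hψ : Measurable ψ := (Lp.stronglyMeasurable ψ).measurable
  have hψ_sq : Integrable (fun y => ‖ψ y‖ ^ 2) ρ :=
    (memLp_two_iff_integrable_sq_norm (Lp.aestronglyMeasurable ψ)).1 (Lp.memLp ψ)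
  rw [← Lp.toLp_coeFn ψ (Lp.memLp ψ), inner_toLp_toLp, inner_toLp_toLp, hw ψ hψ hψ_sq,
    hv ψ hψ hψ_sq]

variable [CompleteSpace E] [BorelSpace E] [SecondCountableTopology E]

theorem isMatchedField_transferL2 (hY : MeasurePreserving Y μ ρ) (hU : MemLp U 2 μ) :
    IsMatchedField 𝕜 μ ρ Y U (transferL2 𝕜 hY (hU.toLp U)) := fun _ hψ hψ_sq =>
  integral_inner_transferL2 𝕜 hY
    ((memLp_two_iff_integrable_sq_norm hψ.aestronglyMeasurable).2 hψ_sq) hU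

theorem flow_matched_field_exists_unique_general
    (hY : MeasurePreserving Y μ ρ) (hU : MemLp U 2 μ) :
    ∃ v : β → E, Measurable v ∧ Integrable (fun y => ‖v y‖ ^ 2) ρ ∧
      ∫ y, ‖v y‖ ^ 2 ∂ρ ≤ ∫ x, ‖U x‖ ^ 2 ∂μ ∧
      IsMatchedField 𝕜 μ ρ Y U v ∧
      ∀ w : β → E, Measurable w → Integrable (fun y => ‖w y‖ ^ 2) ρ →
        IsMatchedField 𝕜 μ ρ Y U w → w =ᵐ[ρ] v := by
  have hmatch := isMatchedField_transferL2 𝕜 hY hU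
  set v : Lp E 2 ρ := transferL2 𝕜 hY (hU.toLp U)
  have hv : MemLp v 2 ρ := Lp.memLp v
  refine ⟨v, (Lp.stronglyMeasurable v).measurable,
    (memLp_two_iff_integrable_sq_norm hv.aestronglyMeasurable).1 hv,
    integral_norm_sq_transferL2_le 𝕜 hY hU, hmatch, fun w hw hw_sq hw_match => ?_⟩
  have hwL2 : MemLp w 2 ρ := (memLp_two_iff_integrable_sq_norm hw.aestronglyMeasurable).2 hw_sq
  exact hw_match.ae_eq hmatch hwL2 hv

end MatchedField

/-- existence and `ρ_t`-a.e. uniqueness of the flow-matched vector field `v_t`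
with `∫‖v_t‖² dρ_t ≤ ∫‖V(·,t)‖² dμ` and the matching identity
`∫ ⟨ψ, v_t⟩ dρ_t = ∫ ⟨ψ(X_t), V(·,t)⟩ dμ` for all `ψ ∈ L²(ρ_t)`. -/
theorem flow_matched_field_exists_unique {d : ℕ}
    (μ : Measure (EuclideanSpace ℝ (Fin d))) [IsProbabilityMeasure μ]
    (hμ2 : Integrable (fun x => ‖x‖ ^ 2) μ)
    (X V : EuclideanSpace ℝ (Fin d) → ℝ → EuclideanSpace ℝ (Fin d))
    (hXm : Measurable (Function.uncurry X))
    (hVm : Measurable (Function.uncurry V))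
    (hflow : ∀ᵐ x ∂μ, X x 0 = x ∧
      ∀ t ∈ Icc (0 : ℝ) 1, X x t = x + ∫ s in (0 : ℝ)..t, V x s)
    (hE : Integrable (fun x => ∫ s in (0 : ℝ)..1, ‖V x s‖ ^ 2) μ)
    (t : ℝ) (ht : t ∈ Icc (0 : ℝ) 1)
    (hVt : Integrable (fun x => ‖V x t‖ ^ 2) μ) :
    ∃ v : EuclideanSpace ℝ (Fin d) → EuclideanSpace ℝ (Fin d),
      Measurable v ∧
      Integrable (fun y => ‖v y‖ ^ 2) (μ.map (fun x => X x t)) ∧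
      (∫ y, ‖v y‖ ^ 2 ∂(μ.map (fun x => X x t)) ≤ ∫ x, ‖V x t‖ ^ 2 ∂μ) ∧
      (∀ ψ : EuclideanSpace ℝ (Fin d) → EuclideanSpace ℝ (Fin d), Measurable ψ →
        Integrable (fun y => ‖ψ y‖ ^ 2) (μ.map (fun x => X x t)) →
        ∫ y, ⟪ψ y, v y⟫ ∂(μ.map (fun x => X x t)) = ∫ x, ⟪ψ (X x t), V x t⟫ ∂μ) ∧
      (∀ w : EuclideanSpace ℝ (Fin d) → EuclideanSpace ℝ (Fin d), Measurable w →
        Integrable (fun y => ‖w y‖ ^ 2) (μ.map (fun x => X x t)) →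
        (∀ ψ : EuclideanSpace ℝ (Fin d) → EuclideanSpace ℝ (Fin d), Measurable ψ →
          Integrable (fun y => ‖ψ y‖ ^ 2) (μ.map (fun x => X x t)) →
          ∫ y, ⟪ψ y, w y⟫ ∂(μ.map (fun x => X x t)) = ∫ x, ⟪ψ (X x t), V x t⟫ ∂μ) →
        w =ᵐ[μ.map (fun x => X x t)] v) := by
  have hV : Measurable fun x => V x t := hVm.of_uncurry_right
  exact flow_matched_field_exists_unique_general ℝ (hXm.of_uncurry_right.measurePreserving μ)
    ((memLp_two_iff_integrable_sq_norm hV.aestronglyMeasurable).2 hVt)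
end

section
/- Under the Lagrangian flow data assumptions, fix t ∈ [0,1] with ∫ ‖V(x,t)‖² dμ(x) < ∞ and let v_t be the flow-matched vector field, i.e. the (ρ_t-a.e. unique) field with ∫‖v_t‖² dρ_t < ∞ satisfying ∫ ⟨ψ(y), v_t(y)⟩ dρ_t(y) = ∫ ⟨ψ(X_t(x)), V(x,t)⟩ dμ(x) for all ψ ∈ L²(ρ_t). Then for every measurable ψ : ℝ^d → ℝ^d with ∫ ‖ψ‖² dρ_t < ∞, the Pythagorean identity holds: ∫ ‖V(x,t) − ψ(X_t(x))‖² dμ(x) = ∫ ‖V(x,t) − v_t(X_t(x))‖² dμ(x) + ∫ ‖v_t(y) − ψ(y)‖² dρ_t(y). In particular, v_t is the unique (up to ρ_t-null sets) minimizer of ψ ↦ ∫ ‖ψ(X_t(x)) − V(x,t)‖² dμ(x) over ψ ∈ L²(ρ_t). -/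
open MeasureTheory Set
open scoped RealInnerProductSpace

/-!
The matching identity says that `v ∘ X` is the orthogonal projection of `V` in `L²(μ; E)` onto the
subspace of fields of the form `ψ ∘ X`: tested against `ψ`, it reads `⟪V - v ∘ X, ψ ∘ X⟫ = 0`.
Since `(v - ψ) ∘ X` lies in that subspace, `V - ψ ∘ X = (V - v ∘ X) + (v - ψ) ∘ X` is an orthogonal
decomposition. The change of variables `ρ = X_# μ` turns the norm of its second part into the
`L²(ρ)` distance from `v` to `ψ`, which vanishes only if `ψ = v` almost everywhere.
-/

section SquareIntegrable

variable {Ω E : Type*} [MeasurableSpace Ω] {μ : Measure Ω} [NormedAddCommGroup E]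

theorem integrable_inner_of_memLp {𝕜 : Type*} [RCLike 𝕜] [InnerProductSpace 𝕜 E]
    {p q : ENNReal} [p.HolderConjugate q] {f g : Ω → E} (hf : MemLp f p μ) (hg : MemLp g q μ) :
    Integrable (fun x => inner 𝕜 (f x) (g x)) μ := by
  refine memLp_one_iff_integrable.1 (MemLp.of_bilin (inner 𝕜) 1 hf hg (hf.1.inner hg.1) ?_)
  exact ae_of_all μ fun x => by simpa using nnnorm_inner_le_nnnorm (𝕜 := 𝕜) (f x) (g x)

theorem integral_norm_add_sq_real [InnerProductSpace ℝ E] {f g : Ω → E}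
    (hf : MemLp f 2 μ) (hg : MemLp g 2 μ) :
    ∫ x, ‖f x + g x‖ ^ 2 ∂μ =
      ∫ x, ‖f x‖ ^ 2 ∂μ + 2 * ∫ x, ⟪f x, g x⟫ ∂μ + ∫ x, ‖g x‖ ^ 2 ∂μ := by
  have hf_sq : Integrable (fun x => ‖f x‖ ^ 2) μ := (memLp_two_iff_integrable_sq_norm hf.1).1 hf
  have hg_sq : Integrable (fun x => ‖g x‖ ^ 2) μ := (memLp_two_iff_integrable_sq_norm hg.1).1 hg
  have hfg : Integrable (fun x => 2 * ⟪f x, g x⟫) μ := (integrable_inner_of_memLp hf hg).const_mul 2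
  simp_rw [norm_add_sq_real]
  rw [integral_add (by exact hf_sq.add hfg) hg_sq, integral_add hf_sq hfg, integral_const_mul]

theorem integral_norm_sub_pow_eq_zero_iff {n : ℕ} (hn : n ≠ 0) {f g : Ω → E}
    (hfg : Integrable (fun x => ‖f x - g x‖ ^ n) μ) :
    ∫ x, ‖f x - g x‖ ^ n ∂μ = 0 ↔ f =ᵐ[μ] g := by
  rw [integral_eq_zero_iff_of_nonneg (fun x => by positivity) hfg]
  simp only [Filter.EventuallyEq, Pi.zero_apply, pow_eq_zero_iff hn, norm_eq_zero, sub_eq_zero]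

end SquareIntegrable

section FlowMatching

variable {Ω α E : Type*} [MeasurableSpace Ω] [MeasurableSpace α]
  [NormedAddCommGroup E] [InnerProductSpace ℝ E]

/-- `v` is a flow-matched field for the velocity `V` along the map `X`: it is square integrable for
the law `ρ = μ.map X` and `⟪ψ, v⟫` in `L²(ρ)` equals `⟪ψ ∘ X, V⟫` in `L²(μ)` for all `ψ ∈ L²(ρ)`.
A single time is fixed, so `X` and `V` stand for `X_t` and `V(·, t)`, and the space `Ω` of labels
need not be the space `α` of positions. -/
structure IsFlowMatched (μ : Measure Ω) (X : Ω → α) (V : Ω → E) (v : α → E) : Prop where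
  memLp : MemLp v 2 (μ.map X)
  integral_inner_eq : ∀ ψ : α → E, MemLp ψ 2 (μ.map X) →
    ∫ y, ⟪ψ y, v y⟫ ∂(μ.map X) = ∫ x, ⟪ψ (X x), V x⟫ ∂μ

namespace IsFlowMatched

variable {μ : Measure Ω} {X : Ω → α} {V : Ω → E} {v ψ : α → E}

theorem of_stronglyMeasurable (hX : AEMeasurable X μ) (hv : MemLp v 2 (μ.map X))
    (h : ∀ ψ : α → E, StronglyMeasurable ψ → MemLp ψ 2 (μ.map X) →
      ∫ y, ⟪ψ y, v y⟫ ∂(μ.map X) = ∫ x, ⟪ψ (X x), V x⟫ ∂μ) :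
    IsFlowMatched μ X V v where
  memLp := hv
  integral_inner_eq ψ hψ := by
    have hmk : ψ =ᵐ[μ.map X] hψ.1.mk ψ := hψ.1.ae_eq_mk
    calc ∫ y, ⟪ψ y, v y⟫ ∂(μ.map X)
        = ∫ y, ⟪hψ.1.mk ψ y, v y⟫ ∂(μ.map X) :=
          integral_congr_ae (hmk.mono fun y hy => by simp only [hy])
      _ = ∫ x, ⟪hψ.1.mk ψ (X x), V x⟫ ∂μ := h _ hψ.1.stronglyMeasurable_mk (hψ.ae_eq hmk)
      _ = ∫ x, ⟪ψ (X x), V x⟫ ∂μ :=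
          integral_congr_ae ((ae_of_ae_map hX hmk).mono fun x hx => by simp only [hx])

theorem integral_inner_sub_eq_zero (hv : IsFlowMatched μ X V v) (hX : AEMeasurable X μ)
    (hV : MemLp V 2 μ) (hψ : MemLp ψ 2 (μ.map X)) :
    ∫ x, ⟪V x - v (X x), ψ (X x)⟫ ∂μ = 0 := by
  have hψX : MemLp (fun x => ψ (X x)) 2 μ := hψ.comp_of_map hX
  have hvX : MemLp (fun x => v (X x)) 2 μ := hv.memLp.comp_of_map hX
  have hmatch : ∫ x, ⟪ψ (X x), v (X x)⟫ ∂μ = ∫ x, ⟪ψ (X x), V x⟫ ∂μ := by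
    rw [← hv.integral_inner_eq ψ hψ, integral_map hX (hψ.1.inner hv.memLp.1)]
  simp_rw [real_inner_comm (ψ _), inner_sub_right]
  rw [integral_sub (integrable_inner_of_memLp hψX hV) (integrable_inner_of_memLp hψX hvX), hmatch,
    sub_self]

theorem integral_norm_sub_sq (hv : IsFlowMatched μ X V v) (hX : AEMeasurable X μ)
    (hV : MemLp V 2 μ) (hψ : MemLp ψ 2 (μ.map X)) :
    ∫ x, ‖V x - ψ (X x)‖ ^ 2 ∂μ =
      ∫ x, ‖V x - v (X x)‖ ^ 2 ∂μ + ∫ y, ‖v y - ψ y‖ ^ 2 ∂(μ.map X) := by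
  have hd : MemLp (fun y => v y - ψ y) 2 (μ.map X) := hv.memLp.sub hψ
  have hdX : MemLp (fun x => v (X x) - ψ (X x)) 2 μ := hd.comp_of_map hX
  have hr : MemLp (fun x => V x - v (X x)) 2 μ := hV.sub (hv.memLp.comp_of_map hX)
  calc ∫ x, ‖V x - ψ (X x)‖ ^ 2 ∂μ
      = ∫ x, ‖(V x - v (X x)) + (v (X x) - ψ (X x))‖ ^ 2 ∂μ := by
        simp only [sub_add_sub_cancel]
    _ = ∫ x, ‖V x - v (X x)‖ ^ 2 ∂μ + ∫ x, ‖v (X x) - ψ (X x)‖ ^ 2 ∂μ := by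
        rw [integral_norm_add_sq_real hr hdX, hv.integral_inner_sub_eq_zero hX hV hd, mul_zero,
          add_zero]
    _ = ∫ x, ‖V x - v (X x)‖ ^ 2 ∂μ + ∫ y, ‖v y - ψ y‖ ^ 2 ∂(μ.map X) := by
        rw [integral_map hX (by exact hd.1.norm.pow 2)]

theorem integral_norm_sub_sq_le (hv : IsFlowMatched μ X V v) (hX : AEMeasurable X μ)
    (hV : MemLp V 2 μ) (hψ : MemLp ψ 2 (μ.map X)) :
    ∫ x, ‖v (X x) - V x‖ ^ 2 ∂μ ≤ ∫ x, ‖ψ (X x) - V x‖ ^ 2 ∂μ := by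
  simp only [norm_sub_rev _ (V _), hv.integral_norm_sub_sq hX hV hψ]
  exact le_add_of_nonneg_right (integral_nonneg fun y => by positivity)

theorem ae_eq_of_integral_norm_sub_sq_le (hv : IsFlowMatched μ X V v) (hX : AEMeasurable X μ)
    (hV : MemLp V 2 μ) (hψ : MemLp ψ 2 (μ.map X))
    (hle : ∫ x, ‖ψ (X x) - V x‖ ^ 2 ∂μ ≤ ∫ x, ‖v (X x) - V x‖ ^ 2 ∂μ) :
    ψ =ᵐ[μ.map X] v := by
  have hd : MemLp (fun y => v y - ψ y) 2 (μ.map X) := hv.memLp.sub hψ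
  have hdist : ∫ y, ‖v y - ψ y‖ ^ 2 ∂(μ.map X) = 0 := by
    simp only [norm_sub_rev _ (V _), hv.integral_norm_sub_sq hX hV hψ] at hle
    exact le_antisymm (by linarith) (integral_nonneg fun y => by positivity)
  have hd_sq := (memLp_two_iff_integrable_sq_norm hd.1).1 hd
  exact ((integral_norm_sub_pow_eq_zero_iff two_ne_zero hd_sq).1 hdist).symm

end IsFlowMatched

theorem flow_matched_pythagoras_general {μ : Measure Ω} {X : Ω → α} {V : Ω → E} {v ψ : α → E}
    (hX : AEMeasurable X μ) (hV : MemLp V 2 μ) (hv : IsFlowMatched μ X V v)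
    (hψ : MemLp ψ 2 (μ.map X)) :
    (∫ x, ‖V x - ψ (X x)‖ ^ 2 ∂μ =
      (∫ x, ‖V x - v (X x)‖ ^ 2 ∂μ) + ∫ y, ‖v y - ψ y‖ ^ 2 ∂(μ.map X)) ∧
    (∫ x, ‖v (X x) - V x‖ ^ 2 ∂μ ≤ ∫ x, ‖ψ (X x) - V x‖ ^ 2 ∂μ) ∧
    ((∫ x, ‖ψ (X x) - V x‖ ^ 2 ∂μ = ∫ x, ‖v (X x) - V x‖ ^ 2 ∂μ) → ψ =ᵐ[μ.map X] v) :=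
  ⟨hv.integral_norm_sub_sq hX hV hψ, hv.integral_norm_sub_sq_le hX hV hψ,
    fun heq => hv.ae_eq_of_integral_norm_sub_sq_le hX hV hψ heq.le⟩

end FlowMatching

/-- the Pythagorean identity for the flow-matched vector field `v_t`:
for every `ψ ∈ L²(ρ_t)`,
`∫‖V − ψ∘X_t‖² dμ = ∫‖V − v_t∘X_t‖² dμ + ∫‖v_t − ψ‖² dρ_t`,
so `v_t` is the (ρ_t-a.e. unique) minimizer of `ψ ↦ ∫‖ψ∘X_t − V‖² dμ` over `L²(ρ_t)`. -/
theorem flow_matched_pythagoras {d : ℕ}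
    (μ : Measure (EuclideanSpace ℝ (Fin d))) [IsProbabilityMeasure μ]
    (hμ2 : Integrable (fun x => ‖x‖ ^ 2) μ)
    (X V : EuclideanSpace ℝ (Fin d) → ℝ → EuclideanSpace ℝ (Fin d))
    (hXm : Measurable (Function.uncurry X))
    (hVm : Measurable (Function.uncurry V))
    (hflow : ∀ᵐ x ∂μ, X x 0 = x ∧
      ∀ t ∈ Icc (0 : ℝ) 1, X x t = x + ∫ s in (0 : ℝ)..t, V x s)
    (hE : Integrable (fun x => ∫ s in (0 : ℝ)..1, ‖V x s‖ ^ 2) μ)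
    (t : ℝ) (ht : t ∈ Icc (0 : ℝ) 1)
    (hVt : Integrable (fun x => ‖V x t‖ ^ 2) μ)
    (vt : EuclideanSpace ℝ (Fin d) → EuclideanSpace ℝ (Fin d))
    (hvtm : Measurable vt)
    (hvt2 : Integrable (fun y => ‖vt y‖ ^ 2) (μ.map (fun x => X x t)))
    (hmatch : ∀ ψ : EuclideanSpace ℝ (Fin d) → EuclideanSpace ℝ (Fin d), Measurable ψ →
      Integrable (fun y => ‖ψ y‖ ^ 2) (μ.map (fun x => X x t)) →
      ∫ y, ⟪ψ y, vt y⟫ ∂(μ.map (fun x => X x t)) = ∫ x, ⟪ψ (X x t), V x t⟫ ∂μ) :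
    ∀ ψ : EuclideanSpace ℝ (Fin d) → EuclideanSpace ℝ (Fin d), Measurable ψ →
      Integrable (fun y => ‖ψ y‖ ^ 2) (μ.map (fun x => X x t)) →
      (∫ x, ‖V x t - ψ (X x t)‖ ^ 2 ∂μ =
        (∫ x, ‖V x t - vt (X x t)‖ ^ 2 ∂μ) +
          ∫ y, ‖vt y - ψ y‖ ^ 2 ∂(μ.map (fun x => X x t))) ∧
      (∫ x, ‖vt (X x t) - V x t‖ ^ 2 ∂μ ≤ ∫ x, ‖ψ (X x t) - V x t‖ ^ 2 ∂μ) ∧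
      ((∫ x, ‖ψ (X x t) - V x t‖ ^ 2 ∂μ = ∫ x, ‖vt (X x t) - V x t‖ ^ 2 ∂μ) →
        ψ =ᵐ[μ.map (fun x => X x t)] vt) := by
  have hX : AEMeasurable (fun x => X x t) μ := hXm.of_uncurry_right.aemeasurable
  have hV : MemLp (fun x => V x t) 2 μ :=
    (memLp_two_iff_integrable_sq_norm hVm.of_uncurry_right.aestronglyMeasurable).2 hVt
  have hv : IsFlowMatched μ (fun x => X x t) (fun x => V x t) vt :=
    .of_stronglyMeasurable hX ((memLp_two_iff_integrable_sq_norm hvtm.aestronglyMeasurable).2 hvt2)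
      fun ψ hψm hψ => hmatch ψ hψm.measurable ((memLp_two_iff_integrable_sq_norm hψ.1).1 hψ)
  exact fun ψ hψm hψ2 => flow_matched_pythagoras_general hX hV hv
    ((memLp_two_iff_integrable_sq_norm hψm.aestronglyMeasurable).2 hψ2)
end

section
/- Let v : ℝ^d × [0,1] → ℝ^d be continuous, bounded, and Lipschitz in the space variable on compact sets uniformly in t, and let Φ : ℝ^d × [0,1] → ℝ^d be its flow map, i.e. Φ(x,0) = x and ∂_t Φ(x,t) = v(Φ(x,t), t) for all x and t. Let μ be a Borel probability measure on ℝ^d with finite second moment, and let (ρ_t)_{t∈[0,1]} be Borel probability measures on ℝ^d with ρ_0 = μ, such that t ↦ ∫ φ dρ_t is continuous for every bounded continuous φ, and such that the continuity equation holds weakly: for every smooth compactly supported φ : ℝ^d → ℝ and every t ∈ [0,1], ∫ φ dρ_t − ∫ φ dμ = ∫_0^t ∫ ⟨∇φ(y), v(y,r)⟩ dρ_r(y) dr. Then ρ_t = (Φ(·,t))_#μ for every t ∈ [0,1], and consequently ∫ ‖v(y,t)‖² dρ_t(y) = ∫ ‖v(Φ(x,t),t)‖² dμ(x) for every t. -/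
open MeasureTheory Set
open scoped RealInnerProductSpace

/-!
The argument is by duality. Let `f` be constant along characteristics, with compactly supported
Lipschitz terminal value `f b = ψ`. If `f` were smooth it would solve `∂ₜf + Df(v) = 0`, and testing
the continuity equation with it would show that `∫ f t ∂ρ t` does not depend on `t`; since
`f a = ψ ∘ Φ b`, this says that `ρ b` and the pushforward of `ρ a` by the flow integrate `ψ` alike.

As `v` is only Lipschitz in space, `f t` is only Lipschitz, so it is replaced by its mollification
at scale `ε`. Convolution almost commutes with transport: one backward Euler step moves the
mollification by its derivative along `v` up to an error `O(ε)` per unit time, because `v` and `f t`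
are Lipschitz on compact sets. Hence `∫ f t ∗ φ_ε ∂ρ t` has upper right derivative `O(ε)`, and
letting `ε → 0`, for `f` and for `-f`, gives the conservation of `∫ f t ∂ρ t`.
-/

open Filter Topology Metric Function
open scoped NNReal ContDiff Convolution

section IntegralCurves

variable {E : Type*} [NormedAddCommGroup E] {v : ℝ → E → E} {a b M : ℝ}

/-- The class `C_v` of velocity fields on the time interval `[a, b]`, with an explicit speed bound
`M`. As everywhere before the final theorem, time is the first argument of the field. -/
structure IsAdmissible (v : ℝ → E → E) (a b M : ℝ) : Prop where
  continuous_uncurry : Continuous (uncurry v)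
  norm_le : ∀ t ∈ Icc a b, ∀ x, ‖v t x‖ ≤ M
  exists_lipschitzOnWith : ∀ K, IsCompact K → ∃ L : ℝ≥0, ∀ t ∈ Icc a b, LipschitzOnWith L (v t) K

namespace IsAdmissible

theorem mono_right {c : ℝ} (hv : IsAdmissible v a b M) (hc : c ≤ b) : IsAdmissible v a c M where
  continuous_uncurry := hv.continuous_uncurry
  norm_le t ht := hv.norm_le t ⟨ht.1, ht.2.trans hc⟩
  exists_lipschitzOnWith K hK :=
    (hv.exists_lipschitzOnWith K hK).imp fun _ hL t ht ↦ hL t ⟨ht.1, ht.2.trans hc⟩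

theorem bound_nonneg (hv : IsAdmissible v a b M) (hab : a ≤ b) : 0 ≤ M :=
  (norm_nonneg _).trans (hv.norm_le a ⟨le_rfl, hab⟩ 0)

variable [NormedSpace ℝ E]

theorem norm_smul_le (hv : IsAdmissible v a b M) {t : ℝ} (ht : t ∈ Icc a b) {h : ℝ} (hh : 0 ≤ h)
    (x : E) : ‖h • v t x‖ ≤ M * h := by
  rw [norm_smul, Real.norm_of_nonneg hh, mul_comm]
  exact mul_le_mul_of_nonneg_right (hv.norm_le t ht x) hh

theorem norm_integralCurve_sub_le {γ : ℝ → E} (hv : IsAdmissible v a b M)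
    (hγ : IsIntegralCurveOn γ v (Icc a b)) {s t : ℝ} (hs : s ∈ Icc a b) (ht : t ∈ Icc a b) :
    ‖γ t - γ s‖ ≤ M * |t - s| :=
  (convex_Icc a b).norm_image_sub_le_of_norm_hasDerivWithin_le hγ
    (fun r hr ↦ hv.norm_le r hr _) hs ht

theorem norm_integralCurve_le {γ : ℝ → E} (hv : IsAdmissible v a b M)
    (hγ : IsIntegralCurveOn γ v (Icc a b)) {s t : ℝ} (hs : s ∈ Icc a b) (ht : t ∈ Icc a b) :
    ‖γ t‖ ≤ ‖γ s‖ + M * (b - a) := by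
  have hM := hv.bound_nonneg (hs.1.trans hs.2)
  calc ‖γ t‖ ≤ ‖γ s‖ + ‖γ t - γ s‖ := norm_le_norm_add_norm_sub' _ _
    _ ≤ ‖γ s‖ + M * |t - s| := by gcongr; exact hv.norm_integralCurve_sub_le hγ hs ht
    _ ≤ ‖γ s‖ + M * (b - a) := by gcongr; exact abs_sub_le_of_le_of_le ht.1 ht.2 hs.1 hs.2

variable [FiniteDimensional ℝ E]

theorem exists_isIntegralCurveOn (hv : IsAdmissible v a b M) {s : ℝ} (hs : s ∈ Icc a b) (x : E) :
    ∃ γ, γ s = x ∧ IsIntegralCurveOn γ v (Icc a b) := by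
  have hab : 0 ≤ b - a := sub_nonneg.2 (hs.1.trans hs.2)
  have hM := hv.bound_nonneg (hs.1.trans hs.2)
  obtain ⟨L, hL⟩ := hv.exists_lipschitzOnWith (closedBall x (M * (b - a)))
    (isCompact_closedBall _ _)
  have hPL : IsPicardLindelof v (tmin := a) (tmax := b) ⟨s, hs⟩ x ⟨M * (b - a), by positivity⟩ 0
      ⟨M, hM⟩ L :=
    { lipschitzOnWith := hL
      continuousOn := fun y _ ↦ (hv.continuous_uncurry.uncurry_right y).continuousOn
      norm_le := fun t ht y _ ↦ hv.norm_le t ht y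
      mul_max_le := by
        change M * max (b - s) (s - a) ≤ M * (b - a) - 0
        rw [sub_zero]
        gcongr
        exact max_le (by linarith [hs.1]) (by linarith [hs.2]) }
  exact hPL.exists_eq_forall_mem_Icc_hasDerivWithinAt₀

theorem exists_dist_right_le (hv : IsAdmissible v a b M) (R : ℝ) :
    ∃ C : ℝ≥0, ∀ t ∈ Icc a b, ∀ γ γ' : ℝ → E, IsIntegralCurveOn γ v (Icc a b) →
      IsIntegralCurveOn γ' v (Icc a b) → γ t ∈ closedBall 0 R → γ' t ∈ closedBall 0 R →
        dist (γ b) (γ' b) ≤ C * dist (γ t) (γ' t) := by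
  obtain ⟨L, hL⟩ := hv.exists_lipschitzOnWith (closedBall 0 (R + M * (b - a)))
    (isCompact_closedBall _ _)
  refine ⟨⟨Real.exp (L * (b - a)), by positivity⟩, fun t ht γ γ' hγ hγ' hR hR' ↦ ?_⟩
  have hsub : Icc t b ⊆ Icc a b := Icc_subset_Icc_left ht.1
  have hderiv : ∀ {γ : ℝ → E}, IsIntegralCurveOn γ v (Icc a b) →
      ∀ r ∈ Ico t b, HasDerivWithinAt γ (v r (γ r)) (Ici r) r := fun hγ r hr ↦
    (hγ r (hsub (Ico_subset_Icc_self hr))).mono_of_mem_nhdsWithin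
      (mem_of_superset (Icc_mem_nhdsGE hr.2) (Icc_subset_Icc_left (ht.1.trans hr.1)))
  have hmem : ∀ {γ : ℝ → E}, IsIntegralCurveOn γ v (Icc a b) → γ t ∈ closedBall 0 R →
      ∀ r ∈ Ico t b, γ r ∈ closedBall 0 (R + M * (b - a)) := fun hγ hR r hr ↦ by
    rw [mem_closedBall_zero_iff] at hR ⊢
    exact (hv.norm_integralCurve_le hγ ht (hsub (Ico_subset_Icc_self hr))).trans (by gcongr)
  have hgronwall := dist_le_of_trajectories_ODE_of_mem
    (fun r hr ↦ hL r (hsub (Ico_subset_Icc_self hr)))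
    (hγ.continuousOn.mono hsub) (hderiv hγ) (hmem hγ hR)
    (hγ'.continuousOn.mono hsub) (hderiv hγ') (hmem hγ' hR') le_rfl b ⟨ht.2, le_rfl⟩
  calc dist (γ b) (γ' b) ≤ dist (γ t) (γ' t) * Real.exp (L * (b - t)) := hgronwall
    _ ≤ dist (γ t) (γ' t) * Real.exp (L * (b - a)) := by gcongr; exact ht.1
    _ = Real.exp (L * (b - a)) * dist (γ t) (γ' t) := mul_comm _ _

theorem eq_right_of_eq (hv : IsAdmissible v a b M) {γ γ' : ℝ → E}
    (hγ : IsIntegralCurveOn γ v (Icc a b)) (hγ' : IsIntegralCurveOn γ' v (Icc a b)) {t : ℝ}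
    (ht : t ∈ Icc a b) (h : γ t = γ' t) : γ b = γ' b := by
  obtain ⟨C, hC⟩ := hv.exists_dist_right_le ‖γ t‖
  simpa [h] using hC t ht γ γ' hγ hγ' (by simp) (by simp [h])

end IsAdmissible

end IntegralCurves

section Transport

variable {E F : Type*} [NormedAddCommGroup E] [NormedSpace ℝ E] {v : ℝ → E → E} {a b M : ℝ}

/-- Lagrangian solutions of the transport equation `∂ₜf + Df(v) = 0` on the time interval
`[a, b]`: functions which are constant along the characteristics of `v`. No differentiability of
`f` is required. -/
def IsTransported (v : ℝ → E → E) (a b : ℝ) (f : ℝ → E → F) : Prop :=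
  ∀ γ : ℝ → E, IsIntegralCurveOn γ v (Icc a b) → ∀ s ∈ Icc a b, ∀ t ∈ Icc a b,
    f s (γ s) = f t (γ t)

namespace IsTransported

theorem neg [Neg F] {f : ℝ → E → F} (hf : IsTransported v a b f) :
    IsTransported v a b fun t x ↦ -f t x :=
  fun γ hγ s hs t ht ↦ congrArg _ (hf γ hγ s hs t ht)

variable [FiniteDimensional ℝ E]

theorem support_subset [Zero F] {f : ℝ → E → F} (hf : IsTransported v a b f)
    (hv : IsAdmissible v a b M) {R : ℝ} (hR : support (f b) ⊆ closedBall 0 R) {t : ℝ}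
    (ht : t ∈ Icc a b) : support (f t) ⊆ closedBall 0 (R + M * (b - a)) := by
  intro x hx
  obtain ⟨γ, rfl, hγ⟩ := hv.exists_isIntegralCurveOn ht x
  have hb : b ∈ Icc a b := ⟨ht.1.trans ht.2, le_rfl⟩
  rw [mem_support, hf γ hγ t ht b hb] at hx
  have hγb := hR hx
  rw [mem_closedBall_zero_iff] at hγb ⊢
  exact (hv.norm_integralCurve_le hγ hb ht).trans (by gcongr)

variable [PseudoMetricSpace F] {f : ℝ → E → F}

theorem exists_lipschitzOnWith (hf : IsTransported v a b f) (hv : IsAdmissible v a b M) {C : ℝ≥0}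
    (hC : LipschitzWith C (f b)) (R : ℝ) :
    ∃ C' : ℝ≥0, ∀ t ∈ Icc a b, LipschitzOnWith C' (f t) (closedBall 0 R) := by
  obtain ⟨D, hD⟩ := hv.exists_dist_right_le R
  refine ⟨C * D, fun t ht ↦ LipschitzOnWith.of_dist_le_mul fun x hx y hy ↦ ?_⟩
  obtain ⟨γ, rfl, hγ⟩ := hv.exists_isIntegralCurveOn ht x
  obtain ⟨γ', rfl, hγ'⟩ := hv.exists_isIntegralCurveOn ht y
  have hb : b ∈ Icc a b := ⟨ht.1.trans ht.2, le_rfl⟩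
  rw [hf γ hγ t ht b hb, hf γ' hγ' t ht b hb]
  calc dist (f b (γ b)) (f b (γ' b)) ≤ C * dist (γ b) (γ' b) := hC.dist_le_mul _ _
    _ ≤ C * (D * dist (γ t) (γ' t)) := by gcongr; exact hD t ht γ γ' hγ hγ' hx hy
    _ = ↑(C * D) * dist (γ t) (γ' t) := by push_cast; ring

theorem continuousOn_uncurry (hf : IsTransported v a b f) (hv : IsAdmissible v a b M) {C : ℝ≥0}
    (hC : LipschitzWith C (f b)) : ContinuousOn (uncurry f) (Icc a b ×ˢ univ) := by
  rintro ⟨t, x⟩ ⟨ht, -⟩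
  obtain ⟨γ, rfl, hγ⟩ := hv.exists_isIntegralCurveOn (s := t) ht x
  obtain ⟨C', hC'⟩ := hf.exists_lipschitzOnWith hv hC (‖γ t‖ + M * (b - a) + 1)
  have hγ_mem : ∀ s ∈ Icc a b, γ s ∈ closedBall 0 (‖γ t‖ + M * (b - a) + 1) := fun s hs ↦ by
    rw [mem_closedBall_zero_iff]
    linarith [hv.norm_integralCurve_le hγ ht hs]
  have hdist : Tendsto (fun p : ℝ × E ↦ C' * dist p.2 (γ p.1))
      (𝓝[Icc a b ×ˢ univ] (t, γ t)) (𝓝 0) := by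
    have hγ_fst : ContinuousWithinAt (fun p : ℝ × E ↦ γ p.1) (Icc a b ×ˢ univ) (t, γ t) :=
      (hγ.continuousOn t ht).comp continuousWithinAt_fst fun p hp ↦ hp.1
    simpa using Tendsto.const_mul (C' : ℝ) (continuousWithinAt_snd.dist hγ_fst)
  refine tendsto_iff_dist_tendsto_zero.2 (squeeze_zero' (.of_forall fun _ ↦ dist_nonneg) ?_ hdist)
  have hball : ∀ᶠ p : ℝ × E in 𝓝[Icc a b ×ˢ univ] (t, γ t), p.2 ∈ ball (γ t) 1 :=
    nhdsWithin_le_nhds (continuous_snd.continuousAt (ball_mem_nhds _ one_pos))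
  filter_upwards [self_mem_nhdsWithin, hball] with p ⟨hp, _⟩ hp_ball
  change dist (f p.1 p.2) (f t (γ t)) ≤ _
  rw [hf γ hγ t ht p.1 hp]
  refine (hC' p.1 hp).dist_le_mul _ ?_ _ (hγ_mem p.1 hp)
  have hp_norm := norm_le_norm_add_norm_sub' p.2 (γ t)
  rw [mem_ball, dist_eq_norm] at hp_ball
  rw [mem_closedBall_zero_iff]
  nlinarith [hv.bound_nonneg (ht.1.trans ht.2), ht.1.trans ht.2]

theorem continuous (hf : IsTransported v a b f) (hv : IsAdmissible v a b M) {C : ℝ≥0}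
    (hC : LipschitzWith C (f b)) {t : ℝ} (ht : t ∈ Icc a b) : Continuous (f t) :=
  (hf.continuousOn_uncurry hv hC).comp_continuous (by fun_prop : Continuous fun x ↦ (t, x))
    fun x ↦ ⟨ht, mem_univ x⟩

end IsTransported

theorem IsAdmissible.exists_isTransported [FiniteDimensional ℝ E] (hv : IsAdmissible v a b M)
    (hab : a ≤ b) (ψ : E → F) : ∃ f, IsTransported v a b f ∧ f b = ψ := by
  choose! X hX_start hX using
    fun s (hs : s ∈ Icc a b) (x : E) ↦ hv.exists_isIntegralCurveOn hs x
  have hb : b ∈ Icc a b := ⟨hab, le_rfl⟩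
  have hXγ : ∀ γ : ℝ → E, IsIntegralCurveOn γ v (Icc a b) → ∀ s ∈ Icc a b, X s (γ s) b = γ b :=
    fun γ hγ s hs ↦ hv.eq_right_of_eq (hX s hs _) hγ hs (hX_start s hs _)
  exact ⟨fun s x ↦ ψ (X s x b),
    fun γ hγ s hs t ht ↦ congrArg ψ ((hXγ γ hγ s hs).trans (hXγ γ hγ t ht).symm),
    funext fun x ↦ congrArg ψ (hX_start b hb x)⟩

end Transport

section Mollification

variable {E F : Type*} [NormedAddCommGroup E] [NormedSpace ℝ E] [FiniteDimensional ℝ E]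
  [MeasurableSpace E] [BorelSpace E] [NormedAddCommGroup F] [NormedSpace ℝ F]

/-- The mollification of `f` by the normalized bump function `φ`, with respect to Haar measure. -/
noncomputable def mollify (φ : ContDiffBump (0 : E)) (f : E → F) : E → F :=
  φ.normed Measure.addHaar ⋆[ContinuousLinearMap.lsmul ℝ ℝ, Measure.addHaar] f

variable {φ : ContDiffBump (0 : E)}

theorem contDiff_mollify {f : E → F} (hf : Continuous f) : ContDiff ℝ ∞ (mollify φ f) :=
  φ.hasCompactSupport_normed.contDiff_convolution_left _ φ.contDiff_normed hf.locallyIntegrable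

theorem mollify_zero : mollify φ (0 : E → F) = 0 :=
  convolution_zero

theorem norm_mollify_sub_mollify_le {f g : E → F} (hf : Continuous f) (hg : Continuous g)
    {x y : E} {c : ℝ} (h : ∀ u ∈ ball 0 φ.rOut, ‖f (x - u) - g (y - u)‖ ≤ c) :
    ‖mollify φ f x - mollify φ g y‖ ≤ c := by
  have hint : ∀ {k : E → F}, Continuous k →
      Integrable (fun u ↦ φ.normed Measure.addHaar u • k u) Measure.addHaar := fun hk ↦
    (φ.continuous_normed.smul hk).integrable_of_hasCompactSupport
      φ.hasCompactSupport_normed.smul_right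
  have hsub : mollify φ f x - mollify φ g y =
      ∫ u, φ.normed Measure.addHaar u • (f (x - u) - g (y - u)) ∂Measure.addHaar := by
    simp only [smul_sub, mollify, convolution_def, ContinuousLinearMap.lsmul_apply]
    exact (integral_sub (hint (by fun_prop)) (hint (by fun_prop))).symm
  have hbound : ∀ u, ‖φ.normed Measure.addHaar u • (f (x - u) - g (y - u))‖ ≤
      φ.normed Measure.addHaar u * c := fun u ↦ by
    rw [norm_smul, Real.norm_of_nonneg (φ.nonneg_normed u)]
    by_cases hu : u ∈ ball 0 φ.rOut
    · exact mul_le_mul_of_nonneg_left (h u hu) (φ.nonneg_normed u)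
    · rw [← φ.support_normed_eq (μ := Measure.addHaar), notMem_support] at hu
      simp [hu]
  calc ‖mollify φ f x - mollify φ g y‖
      ≤ ∫ u, φ.normed Measure.addHaar u * c ∂Measure.addHaar :=
        hsub ▸ norm_integral_le_of_norm_le (φ.integrable_normed.mul_const c) (.of_forall hbound)
    _ = c := by rw [integral_mul_const, φ.integral_normed, one_mul]

theorem norm_mollify_le {f : E → F} (hf : Continuous f) {c : ℝ} (h : ∀ x, ‖f x‖ ≤ c) (x : E) :
    ‖mollify φ f x‖ ≤ c := by
  simpa [mollify_zero] using norm_mollify_sub_mollify_le (φ := φ) (g := 0) (y := x) hf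
    continuous_zero fun u _ ↦ by simpa using h (x - u)

theorem support_mollify_subset {f : E → F} {R : ℝ} (hf : support f ⊆ closedBall 0 R) :
    support (mollify φ f) ⊆ closedBall 0 (R + φ.rOut) := by
  refine (support_convolution_subset _).trans ?_
  rw [φ.support_normed_eq]
  rintro _ ⟨u, hu, y, hy, rfl⟩
  have hy := hf hy
  rw [mem_ball_zero_iff] at hu
  rw [mem_closedBall_zero_iff] at hy ⊢
  exact (norm_add_le u y).trans (by linarith)

theorem hasCompactSupport_mollify {f : E → F} (hf : HasCompactSupport f) :
    HasCompactSupport (mollify φ f) :=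
  φ.hasCompactSupport_normed.convolution _ hf

theorem continuousOn_uncurry_mollify {P : Type*} [TopologicalSpace P] {f : P → E → F} {S : Set P}
    {K : Set E} (hf : ContinuousOn (uncurry f) (S ×ˢ univ)) (hK : IsCompact K)
    (hfK : ∀ p ∈ S, support (f p) ⊆ K) :
    ContinuousOn (uncurry fun p ↦ mollify φ (f p)) (S ×ˢ univ) :=
  continuousOn_convolution_right_with_param _ hK
    (fun p _ hp hx ↦ notMem_support.1 fun h ↦ hx (hfK p hp h))
    φ.continuous_normed.locallyIntegrable hf

variable {ι : Type*} {l : Filter ι} {φ : ι → ContDiffBump (0 : E)}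

theorem tendsto_integral_mollify [CompleteSpace F] [l.IsCountablyGenerated]
    (hφ : Tendsto (fun i ↦ (φ i).rOut) l (𝓝 0)) (ν : Measure E) [IsFiniteMeasureOnCompacts ν]
    {f : E → F} (hf : Continuous f) (hfc : HasCompactSupport f) :
    Tendsto (fun i ↦ ∫ x, mollify (φ i) f x ∂ν) l (𝓝 (∫ x, f x ∂ν)) := by
  obtain ⟨B, hB⟩ := hfc.exists_bound_of_continuous hf
  obtain ⟨R, hR⟩ := hfc.isCompact.isBounded.subset_closedBall (0 : E)
  refine tendsto_integral_filter_of_dominated_convergence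
    ((closedBall 0 (R + 1)).indicator fun _ ↦ B)
    (.of_forall fun i ↦ (contDiff_mollify hf).continuous.aestronglyMeasurable) ?_
    ((integrable_indicator_iff measurableSet_closedBall).2
      (integrableOn_const (isCompact_closedBall _ _).measure_lt_top.ne))
    (.of_forall fun x ↦ ContDiffBump.convolution_tendsto_right_of_continuous hφ hf x)
  filter_upwards [hφ.eventually_le_const one_pos] with i hi
  refine .of_forall fun x ↦ ?_
  by_cases hx : x ∈ closedBall (0 : E) (R + 1)
  · rw [indicator_of_mem hx]
    exact norm_mollify_le hf hB x
  · have hx_supp : x ∉ support (mollify (φ i) f) := fun h ↦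
      hx (closedBall_subset_closedBall (by gcongr)
        (support_mollify_subset ((subset_tsupport f).trans hR) h))
    rw [notMem_support.1 hx_supp, norm_zero, indicator_of_notMem hx]

/-- A sequence of bump functions whose supports shrink to the origin. -/
noncomputable def shrinkingBump (E : Type*) [NormedAddCommGroup E] (n : ℕ) :
    ContDiffBump (0 : E) where
  rIn := 1 / (n + 1) / 2
  rOut := 1 / (n + 1)
  rIn_pos := by positivity
  rIn_lt_rOut := half_lt_self (by positivity)

theorem tendsto_rOut_shrinkingBump (E : Type*) [NormedAddCommGroup E] :
    Tendsto (fun n ↦ (shrinkingBump E n).rOut) atTop (𝓝 0) :=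
  tendsto_one_div_add_atTop_nhds_zero_nat

theorem measure_eq_of_integral_eq_of_lipschitzWith {μ ν : Measure E} [IsFiniteMeasureOnCompacts μ]
    [IsFiniteMeasureOnCompacts ν]
    (h : ∀ (ψ : E → ℝ) (C : ℝ≥0), LipschitzWith C ψ → HasCompactSupport ψ →
      ∫ x, ψ x ∂μ = ∫ x, ψ x ∂ν) : μ = ν := by
  refine Measure.ext_of_integral_eq_on_compactlySupported fun f ↦ ?_
  have hmollify : ∀ n, ∫ x, mollify (shrinkingBump E n) f x ∂μ =
      ∫ x, mollify (shrinkingBump E n) f x ∂ν := fun n ↦ by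
    have hcompact := hasCompactSupport_mollify (φ := shrinkingBump E n) f.hasCompactSupport
    obtain ⟨C, hC⟩ := (contDiff_mollify f.continuous).lipschitzWith_of_hasCompactSupport hcompact
      (by simp)
    exact h _ C hC hcompact
  refine tendsto_nhds_unique (tendsto_integral_mollify (tendsto_rOut_shrinkingBump E) μ
    f.continuous f.hasCompactSupport) ?_
  simp only [hmollify]
  exact tendsto_integral_mollify (tendsto_rOut_shrinkingBump E) ν f.continuous f.hasCompactSupport

end Mollification

section VagueContinuity

theorem norm_integral_le_mul_measureReal {X F : Type*} [MeasurableSpace X] [NormedAddCommGroup F]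
    [NormedSpace ℝ F] {ν : Measure X} {K : Set X} (hK : ν K < ⊤) {f : X → F}
    (hfK : support f ⊆ K) {c : ℝ} (hc : ∀ x ∈ K, ‖f x‖ ≤ c) : ‖∫ x, f x ∂ν‖ ≤ c * ν.real K := by
  rw [← setIntegral_eq_integral_of_forall_compl_eq_zero fun x hx ↦
    notMem_support.1 fun h ↦ hx (hfK h)]
  exact norm_setIntegral_le_of_norm_le_const hK hc

variable {P X : Type*} [TopologicalSpace P] [TopologicalSpace X] [MeasurableSpace X]

/-- Vague continuity on `S` of a family of measures that are finite on compact sets: continuity of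
the integrals of all compactly supported continuous functions. -/
structure IsVaguelyContinuousOn (ρ : P → Measure X) (S : Set P) : Prop where
  isFiniteMeasureOnCompacts : ∀ p ∈ S, IsFiniteMeasureOnCompacts (ρ p)
  continuousOn_integral : ∀ φ : X → ℝ, Continuous φ → HasCompactSupport φ →
    ContinuousOn (fun p ↦ ∫ x, φ x ∂ρ p) S

namespace IsVaguelyContinuousOn

variable [T2Space X] [LocallyCompactSpace X] [BorelSpace X] {ρ : P → Measure X} {S : Set P}
  {K : Set X}

theorem exists_measureReal_le (hρ : IsVaguelyContinuousOn ρ S) (hS : IsCompact S)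
    (hK : IsCompact K) : ∃ m, ∀ p ∈ S, (ρ p).real K ≤ m := by
  obtain ⟨φ, hφ_one, -, hφ_compact, hφ_mem⟩ :=
    exists_continuous_one_zero_of_isCompact hK isClosed_empty (disjoint_empty K)
  obtain ⟨m, hm⟩ := hS.bddAbove_image (hρ.continuousOn_integral φ φ.continuous hφ_compact)
  refine ⟨m, fun p hp ↦ ?_⟩
  have := hρ.isFiniteMeasureOnCompacts p hp
  have hφ_int : Integrable φ (ρ p) := φ.continuous.integrable_of_hasCompactSupport hφ_compact
  calc (ρ p).real K = ∫ x in K, φ x ∂ρ p := by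
        rw [setIntegral_congr_fun hK.measurableSet hφ_one]
        simp
    _ ≤ ∫ x, φ x ∂ρ p := setIntegral_le_integral hφ_int (.of_forall fun x ↦ (hφ_mem x).1)
    _ ≤ m := hm (mem_image_of_mem _ hp)

theorem continuousOn_integral_of_support_subset (hρ : IsVaguelyContinuousOn ρ S) (hS : IsCompact S)
    (hK : IsCompact K) {f : P → X → ℝ} (hf : ContinuousOn (uncurry f) (S ×ˢ univ))
    (hfK : ∀ p ∈ S, support (f p) ⊆ K) : ContinuousOn (fun p ↦ ∫ x, f p x ∂ρ p) S := by
  intro p hp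
  obtain ⟨m, hm⟩ := hρ.exists_measureReal_le hS hK
  have hm_nonneg : 0 ≤ m := measureReal_nonneg.trans (hm p hp)
  have hf_cont : ∀ q ∈ S, Continuous (f q) := fun q hq ↦
    hf.comp_continuous (by fun_prop : Continuous fun x ↦ (q, x)) fun x ↦ ⟨hq, mem_univ x⟩
  have hf_compact : ∀ q ∈ S, HasCompactSupport (f q) := fun q hq ↦
    .of_support_subset_isCompact hK (hfK q hq)
  have hfixed : Tendsto (fun q ↦ ∫ x, f p x ∂ρ q) (𝓝[S] p) (𝓝 (∫ x, f p x ∂ρ p)) :=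
    hρ.continuousOn_integral _ (hf_cont p hp) (hf_compact p hp) p hp
  refine (tendsto_iff_of_dist ?_).1 hfixed
  refine Metric.tendsto_nhds.2 fun ε hε ↦ ?_
  obtain ⟨U, hU, hUK⟩ := hK.mem_uniformity_of_prod (f := f) (s := S)
    (hf.mono (prod_mono_right (subset_univ K))) hp (dist_mem_uniformity (ε := ε / (m + 1))
      (by positivity))
  filter_upwards [hU, self_mem_nhdsWithin] with q hqU hq
  have := hρ.isFiniteMeasureOnCompacts q hq
  have hint : ∀ r ∈ S, Integrable (f r) (ρ q) := fun r hr ↦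
    (hf_cont r hr).integrable_of_hasCompactSupport (hf_compact r hr)
  rw [Real.dist_eq, sub_zero, abs_of_nonneg dist_nonneg, dist_comm, dist_eq_norm,
    ← integral_sub (hint q hq) (hint p hp)]
  calc ‖∫ x, f q x - f p x ∂ρ q‖ ≤ ε / (m + 1) * (ρ q).real K :=
        norm_integral_le_mul_measureReal hK.measure_lt_top
          ((support_sub _ _).trans (union_subset (hfK q hq) (hfK p hp)))
          fun x hx ↦ (dist_eq_norm _ _).symm.trans_le (hUK q hqU x hx).le
    _ ≤ ε / (m + 1) * m := by gcongr; exact hm q hq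
    _ < ε := by rw [div_mul_eq_mul_div, div_lt_iff₀ (by positivity)]; linarith

end IsVaguelyContinuousOn

end VagueContinuity

section FDerivApply

variable {E F : Type*} [NormedAddCommGroup E] [NormedSpace ℝ E] [NormedAddCommGroup F]
  [NormedSpace ℝ F]

theorem support_fderiv_apply_subset (f : E → F) (w : E → E) :
    support (fun x ↦ fderiv ℝ f x (w x)) ⊆ tsupport f :=
  fun x hx ↦ support_fderiv_subset ℝ fun h ↦ hx (by simp [h])

theorem hasCompactSupport_fderiv_apply {f : E → F} (hf : HasCompactSupport f) (w : E → E) :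
    HasCompactSupport fun x ↦ fderiv ℝ f x (w x) :=
  .of_support_subset_isCompact hf (support_fderiv_apply_subset f w)

end FDerivApply

section ContinuityEquation

variable {E : Type*} [NormedAddCommGroup E] [NormedSpace ℝ E] [MeasurableSpace E]
  {v : ℝ → E → E} {ρ : ℝ → Measure E} {a b : ℝ}

/-- Vaguely continuous weak solutions `ρ` of the continuity equation `∂ₜρ + ∇·(ρ v) = 0` on the
time interval `[a, b]`. -/
structure IsWeakSolution (v : ℝ → E → E) (ρ : ℝ → Measure E) (a b : ℝ) : Prop extends
    IsVaguelyContinuousOn ρ (Icc a b) where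
  integral_sub_integral : ∀ φ : E → ℝ, ContDiff ℝ ∞ φ → HasCompactSupport φ → ∀ t ∈ Icc a b,
    ∫ y, φ y ∂ρ t - ∫ y, φ y ∂ρ a = ∫ r in a..t, ∫ y, fderiv ℝ φ y (v r y) ∂ρ r

namespace IsWeakSolution

theorem mono_right (hρ : IsWeakSolution v ρ a b) {c : ℝ} (hc : c ≤ b) :
    IsWeakSolution v ρ a c where
  isFiniteMeasureOnCompacts t ht := hρ.isFiniteMeasureOnCompacts t ⟨ht.1, ht.2.trans hc⟩
  continuousOn_integral φ hφ hφc :=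
    (hρ.continuousOn_integral φ hφ hφc).mono (Icc_subset_Icc_right hc)
  integral_sub_integral φ hφ hφc t ht :=
    hρ.integral_sub_integral φ hφ hφc t ⟨ht.1, ht.2.trans hc⟩

theorem hasDerivWithinAt_integral [FiniteDimensional ℝ E] [BorelSpace E]
    (hρ : IsWeakSolution v ρ a b) (hv : Continuous (uncurry v)) {φ : E → ℝ} (hφ : ContDiff ℝ ∞ φ)
    (hφc : HasCompactSupport φ) {t : ℝ} (ht : t ∈ Icc a b) :
    HasDerivWithinAt (fun r ↦ ∫ y, φ y ∂ρ r) (∫ y, fderiv ℝ φ y (v t y) ∂ρ t) (Icc a b) t := by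
  have hderiv : Continuous (uncurry fun r y ↦ fderiv ℝ φ y (v r y)) :=
    ((hφ.continuous_fderiv (by simp)).comp continuous_snd).clm_apply hv
  have hflux : ContinuousOn (fun r ↦ ∫ y, fderiv ℝ φ y (v r y) ∂ρ r) (Icc a b) :=
    hρ.continuousOn_integral_of_support_subset isCompact_Icc hφc hderiv.continuousOn
      fun r _ ↦ support_fderiv_apply_subset φ (v r)
  have : Fact (t ∈ Icc a b) := ⟨ht⟩
  have hFTC := intervalIntegral.integral_hasDerivWithinAt_right (s := Icc a b)
    ((hflux.mono (Icc_subset_Icc_right ht.2)).intervalIntegrable_of_Icc ht.1)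
    (hflux.stronglyMeasurableAtFilter_nhdsWithin measurableSet_Icc t) (hflux t ht)
  refine (hFTC.const_add (∫ y, φ y ∂ρ a)).congr_of_mem (fun r hr ↦ ?_) ht
  exact (add_eq_of_eq_sub' (hρ.integral_sub_integral φ hφ hφc r hr).symm).symm

end IsWeakSolution

end ContinuityEquation

section Commutator

theorem eventually_mul_sub_lt (c t : ℝ) {δ : ℝ} (hδ : 0 < δ) : ∀ᶠ z in 𝓝[>] t, c * (z - t) < δ :=
  nhdsWithin_le_nhds ((by fun_prop : Continuous fun z ↦ c * (z - t)).tendsto' t 0 (by simp)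
    |>.eventually_lt_const hδ)

variable {E F : Type*} [NormedAddCommGroup E] [NormedSpace ℝ E] [NormedAddCommGroup F]
  [NormedSpace ℝ F] {v : ℝ → E → E} {a b M : ℝ}

theorem exists_norm_add_sub_sub_fderiv_le {f : E → F} (hf : ContDiff ℝ 1 f)
    (hfc : HasCompactSupport f) {η : ℝ} (hη : 0 < η) :
    ∃ δ > 0, ∀ x u, ‖u‖ ≤ δ → ‖f (x + u) - f x - fderiv ℝ f x u‖ ≤ η * ‖u‖ := by
  have huc := (hfc.fderiv ℝ).uniformContinuous_of_continuous (hf.continuous_fderiv one_ne_zero)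
  obtain ⟨δ, hδ, hfδ⟩ := Metric.uniformContinuous_iff.1 huc η hη
  refine ⟨δ / 2, by positivity, fun x u hu ↦ ?_⟩
  have hbound : ∀ y ∈ segment ℝ x (x + u), ‖fderiv ℝ f y - fderiv ℝ f x‖ ≤ η := fun y hy ↦ by
    rw [← dist_eq_norm]
    refine (hfδ ?_).le
    have hyx : ‖y - x‖ ≤ ‖u‖ := by simpa using norm_sub_le_of_mem_segment hy
    rw [dist_eq_norm]
    linarith
  simpa using (convex_segment x (x + u)).norm_image_sub_le_of_norm_fderiv_le'
    (fun y _ ↦ hf.differentiable one_ne_zero y) hbound (left_mem_segment ℝ _ _)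
    (right_mem_segment ℝ _ _)

theorem norm_left_sub_le_of_isIntegralCurveOn {γ : ℝ → E} {t z : ℝ} (htz : t ≤ z)
    (hγ : IsIntegralCurveOn γ v (Icc t z)) {w : E} {η : ℝ}
    (h : ∀ r ∈ Icc t z, ‖v r (γ r) - w‖ ≤ η) : ‖γ t - (γ z - (z - t) • w)‖ ≤ η * (z - t) := by
  have hmvt := (convex_Icc t z).norm_image_sub_le_of_norm_hasDerivWithin_le
    (f := fun r ↦ γ r - r • w) (fun r hr ↦ (hγ r hr).sub ((hasDerivWithinAt_id r _).smul_const w))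
    (fun r hr ↦ by rw [one_smul]; exact h r hr) ⟨htz, le_rfl⟩ ⟨le_rfl, htz⟩
  convert hmvt using 2
  · module
  · rw [Real.norm_eq_abs, abs_sub_comm, abs_of_nonneg (sub_nonneg.2 htz)]

variable [FiniteDimensional ℝ E]

theorem IsAdmissible.eventually_norm_backward_sub_le (hv : IsAdmissible v a b M) {t : ℝ}
    (ht : t ∈ Ico a b) (R : ℝ) {η : ℝ} (hη : 0 < η) :
    ∀ᶠ z in 𝓝[>] t, ∀ γ : ℝ → E, IsIntegralCurveOn γ v (Icc a b) → γ z ∈ closedBall 0 R →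
      ‖γ t - (γ z - (z - t) • v t (γ z))‖ ≤ η * (z - t) := by
  have hM := hv.bound_nonneg (ht.1.trans ht.2.le)
  have huc := (isCompact_Icc.prod (isCompact_closedBall (0 : E) (R + M * (b - a)))
    ).uniformContinuousOn_of_continuous (s := Icc a b ×ˢ closedBall 0 (R + M * (b - a)))
    hv.continuous_uncurry.continuousOn
  obtain ⟨δ, hδ, hvδ⟩ := Metric.uniformContinuousOn_iff.1 huc η hη
  filter_upwards [Ioo_mem_nhdsGT ht.2, eventually_mul_sub_lt (M + 1) t hδ] with z hz hzδ γ hγ hγz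
  have hsub : Icc t z ⊆ Icc a b := Icc_subset_Icc ht.1 hz.2.le
  have hz_mem : z ∈ Icc t z := ⟨hz.1.le, le_rfl⟩
  have hmem : ∀ r ∈ Icc a b, (r, γ z) ∈ Icc a b ×ˢ closedBall 0 (R + M * (b - a)) ∧
      (r, γ r) ∈ Icc a b ×ˢ closedBall 0 (R + M * (b - a)) := fun r hr ↦ by
    have hγr := hv.norm_integralCurve_le hγ (hsub hz_mem) hr
    have hγz' := hv.norm_integralCurve_le hγ (hsub hz_mem) (hsub hz_mem)
    simp only [mem_prod, mem_closedBall_zero_iff] at hγz ⊢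
    exact ⟨⟨hr, by nlinarith [hr.1.trans hr.2]⟩, hr, by linarith⟩
  refine norm_left_sub_le_of_isIntegralCurveOn hz.1.le (hγ.mono hsub) fun r hr ↦ ?_
  have hrt : dist r t ≤ z - t := by
    rw [Real.dist_eq, abs_of_nonneg (sub_nonneg.2 hr.1)]
    linarith [hr.2]
  have hγr : dist (γ r) (γ z) ≤ M * (z - t) := by
    rw [dist_eq_norm]
    refine (hv.norm_integralCurve_sub_le hγ (hsub hz_mem) (hsub hr)).trans ?_
    gcongr
    exact abs_sub_le_of_le_of_le hr.1 hr.2 hz.1.le le_rfl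
  rw [← dist_eq_norm]
  refine (hvδ (r, γ r) (hmem r (hsub hr)).2 (t, γ z) (hmem t ⟨ht.1, ht.2.le⟩).1 ?_).le
  exact max_lt (by nlinarith [hz.1]) (by nlinarith [hz.1])

-- The translate by `u` of an Euler step from `x` replaces the Euler step from `x - u`, so that a
-- convolution in `u` can be evaluated at a single point; this costs `L * ε` per unit time.
theorem IsAdmissible.eventually_norm_backward_sub_sub_le (hv : IsAdmissible v a b M) {t : ℝ}
    (ht : t ∈ Ico a b) {L : ℝ≥0} {R ε : ℝ} (hL : LipschitzOnWith L (v t) (closedBall 0 (R + ε)))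
    (hε : 0 < ε) :
    ∀ᶠ z in 𝓝[>] t, ∀ x ∈ closedBall 0 R, ∀ u ∈ ball 0 ε, ∀ γ : ℝ → E,
      IsIntegralCurveOn γ v (Icc a b) → γ z = x - u →
        ‖γ t - (x - (z - t) • v t x - u)‖ ≤ (L + 1) * ε * (z - t) := by
  filter_upwards [self_mem_nhdsWithin, hv.eventually_norm_backward_sub_le ht (R + ε) hε]
    with z hz hz_backward x hx u hu γ hγ hγz
  have hzt : 0 < z - t := sub_pos.2 hz
  rw [mem_ball_zero_iff] at hu
  rw [mem_closedBall_zero_iff] at hx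
  have hxu : ‖x - u‖ ≤ R + ε := (norm_sub_le _ _).trans (by linarith)
  have hLu : ‖v t x - v t (x - u)‖ ≤ L * ‖u‖ := by
    simpa [dist_eq_norm] using hL.dist_le_mul x (by simpa using hx.trans (by linarith))
      (x - u) (by simpa using hxu)
  have hback := hz_backward γ hγ (by simpa [hγz] using hxu)
  rw [hγz] at hback
  calc ‖γ t - (x - (z - t) • v t x - u)‖
      = ‖(γ t - (x - u - (z - t) • v t (x - u))) + (z - t) • (v t x - v t (x - u))‖ := by
        congr 1; module
    _ ≤ ε * (z - t) + (z - t) * (L * ε) := by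
        refine (norm_add_le _ _).trans (add_le_add hback ?_)
        rw [norm_smul, Real.norm_of_nonneg hzt.le]
        gcongr
        exact hLu.trans (by gcongr)
    _ = (L + 1) * ε * (z - t) := by ring

variable [MeasurableSpace E] [BorelSpace E] {φ : ContDiffBump (0 : E)} {f : ℝ → E → F} {L C : ℝ≥0}
  {R t : ℝ}

theorem IsTransported.eventually_norm_mollify_sub_mollify_le (hf : IsTransported v a b f)
    (hv : IsAdmissible v a b M) (hfc : ∀ s ∈ Icc a b, Continuous (f s)) (hφ : φ.rOut ≤ 1)
    (ht : t ∈ Ico a b) (hL : LipschitzOnWith L (v t) (closedBall 0 (R + 1)))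
    (hC : LipschitzOnWith C (f t) (closedBall 0 (R + 2))) :
    ∀ᶠ z in 𝓝[>] t, ∀ x ∈ closedBall 0 R,
      ‖mollify φ (f z) x - mollify φ (f t) (x - (z - t) • v t x)‖ ≤
        C * (L + 1) * φ.rOut * (z - t) := by
  have ht' : t ∈ Icc a b := Ico_subset_Icc_self ht
  filter_upwards [Ioo_mem_nhdsGT ht.2, eventually_mul_sub_lt M t one_pos,
    hv.eventually_norm_backward_sub_sub_le ht
      (hL.mono (closedBall_subset_closedBall (by gcongr))) φ.rOut_pos]
    with z hz hz_close hz_foot x hx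
  have hz' : z ∈ Icc a b := ⟨ht.1.trans hz.1.le, hz.2.le⟩
  have hzt : 0 < z - t := sub_pos.2 hz.1
  refine norm_mollify_sub_mollify_le (hfc z hz') (hfc t ht') fun u hu ↦ ?_
  obtain ⟨γ, hγz, hγ⟩ := hv.exists_isIntegralCurveOn hz' (x - u)
  have hfoot := hz_foot x hx u hu γ hγ hγz
  rw [mem_ball_zero_iff] at hu
  rw [mem_closedBall_zero_iff] at hx
  have hxu : ‖x - u‖ ≤ R + 1 := (norm_sub_le _ _).trans (by linarith)
  have hγt_mem : γ t ∈ closedBall 0 (R + 2) := by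
    have hγt : ‖γ t - (x - u)‖ ≤ M * (z - t) := by
      rw [← hγz, ← abs_of_pos hzt, abs_sub_comm]
      exact hv.norm_integralCurve_sub_le hγ hz' ht'
    rw [mem_closedBall_zero_iff]
    linarith [norm_le_norm_add_norm_sub' (γ t) (x - u)]
  have hstep_mem : x - (z - t) • v t x - u ∈ closedBall 0 (R + 2) := by
    have hstep := hv.norm_smul_le ht' hzt.le x
    rw [mem_closedBall_zero_iff, sub_right_comm]
    exact (norm_sub_le _ _).trans (by linarith)
  rw [← hγz, hf γ hγ z hz' t ht', ← dist_eq_norm]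
  calc dist (f t (γ t)) (f t (x - (z - t) • v t x - u))
      ≤ C * dist (γ t) (x - (z - t) • v t x - u) := hC.dist_le_mul _ hγt_mem _ hstep_mem
    _ ≤ C * ((L + 1) * φ.rOut * (z - t)) := by rw [dist_eq_norm]; gcongr
    _ = C * (L + 1) * φ.rOut * (z - t) := by ring

theorem IsTransported.eventually_norm_mollify_sub_add_fderiv_le (hf : IsTransported v a b f)
    (hv : IsAdmissible v a b M) (hfc : ∀ s ∈ Icc a b, Continuous (f s)) (hφ : φ.rOut ≤ 1)
    (ht : t ∈ Ico a b) (hft : HasCompactSupport (f t))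
    (hL : LipschitzOnWith L (v t) (closedBall 0 (R + 1)))
    (hC : LipschitzOnWith C (f t) (closedBall 0 (R + 2))) :
    ∀ᶠ z in 𝓝[>] t, ∀ x ∈ closedBall 0 R,
      ‖mollify φ (f z) x - mollify φ (f t) x + (z - t) • fderiv ℝ (mollify φ (f t)) x (v t x)‖ ≤
        (C * (L + 1) + M) * φ.rOut * (z - t) := by
  have ht' : t ∈ Icc a b := Ico_subset_Icc_self ht
  obtain ⟨δ, hδ, hTaylor⟩ := exists_norm_add_sub_sub_fderiv_le
    ((contDiff_mollify (φ := φ) (hfc t ht')).of_le (by simp)) (hasCompactSupport_mollify hft)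
    φ.rOut_pos
  filter_upwards [self_mem_nhdsWithin, eventually_mul_sub_lt M t hδ,
    hf.eventually_norm_mollify_sub_mollify_le hv hfc hφ ht hL hC] with z hz hzδ hz_foot x hx
  have hzt : 0 < z - t := sub_pos.2 hz
  have hstep : ‖-((z - t) • v t x)‖ ≤ M * (z - t) :=
    (norm_neg _).trans_le (hv.norm_smul_le ht' hzt.le x)
  set G := mollify φ (f t)
  have hG := (hTaylor x _ (hstep.trans hzδ.le)).trans
    (mul_le_mul_of_nonneg_left hstep φ.rOut_pos.le)
  rw [map_neg, map_smul, ← sub_eq_add_neg, sub_neg_eq_add] at hG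
  calc ‖mollify φ (f z) x - G x + (z - t) • fderiv ℝ G x (v t x)‖
      = ‖(mollify φ (f z) x - G (x - (z - t) • v t x)) +
          (G (x - (z - t) • v t x) - G x + (z - t) • fderiv ℝ G x (v t x))‖ := by
        congr 1; abel
    _ ≤ C * (L + 1) * φ.rOut * (z - t) + φ.rOut * (M * (z - t)) :=
        (norm_add_le _ _).trans (add_le_add (hz_foot x hx) hG)
    _ = (C * (L + 1) + M) * φ.rOut * (z - t) := by ring

end Commutator

section Duality

variable {E : Type*} [NormedAddCommGroup E] [NormedSpace ℝ E] [FiniteDimensional ℝ E]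
  [MeasurableSpace E] [BorelSpace E] {v : ℝ → E → E} {ρ : ℝ → Measure E} {a b M R : ℝ}

theorem IsWeakSolution.tendsto_slope_integral_sub (hρ : IsWeakSolution v ρ a b)
    (hv : Continuous (uncurry v)) {φ : E → ℝ} (hφ : ContDiff ℝ ∞ φ) (hφc : HasCompactSupport φ)
    {t : ℝ} (ht : t ∈ Ico a b) :
    Tendsto (fun z ↦ slope (fun s ↦ ∫ y, φ y ∂ρ s) t z - ∫ y, fderiv ℝ φ y (v t y) ∂ρ z)
      (𝓝[>] t) (𝓝 0) := by
  have ht' : t ∈ Icc a b := Ico_subset_Icc_self ht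
  have hIoi : Icc a b ∈ 𝓝[>] t :=
    mem_of_superset (Icc_mem_nhdsGT ht.2) (Icc_subset_Icc_left ht.1)
  have hslope := (hasDerivWithinAt_iff_tendsto_slope' self_notMem_Ioi).1
    ((hρ.hasDerivWithinAt_integral hv hφ hφc ht').mono_of_mem_nhdsWithin hIoi)
  have hflux_cont : Continuous fun y ↦ fderiv ℝ φ y (v t y) :=
    (hφ.continuous_fderiv (by simp)).clm_apply (hv.uncurry_left t)
  have hflux : Tendsto (fun z ↦ ∫ y, fderiv ℝ φ y (v t y) ∂ρ z) (𝓝[>] t)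
      (𝓝 (∫ y, fderiv ℝ φ y (v t y) ∂ρ t)) :=
    (hρ.continuousOn_integral _ hflux_cont (hasCompactSupport_fderiv_apply hφc _) t ht').mono_left
      (nhdsWithin_le_of_mem hIoi)
  simpa using hslope.sub hflux

namespace IsTransported

variable {f : ℝ → E → ℝ} {C : ℝ≥0}

theorem support_mollify_subset_closedBall (hf : IsTransported v a b f) (hv : IsAdmissible v a b M)
    (hR : support (f b) ⊆ closedBall 0 R) {φ : ContDiffBump (0 : E)} (hφ : φ.rOut ≤ 1) {t : ℝ}
    (ht : t ∈ Icc a b) :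
    support (mollify φ (f t)) ⊆ closedBall 0 (R + M * (b - a) + 1) :=
  (support_mollify_subset (hf.support_subset hv hR ht)).trans
    (closedBall_subset_closedBall (by gcongr))

theorem exists_norm_integral_mollify_sub_add_fderiv_le (hf : IsTransported v a b f)
    (hv : IsAdmissible v a b M) (hC : LipschitzWith C (f b))
    (hR : support (f b) ⊆ closedBall 0 R) (hab : a ≤ b) :
    ∃ κ, 0 ≤ κ ∧ ∀ φ : ContDiffBump (0 : E), φ.rOut ≤ 1 → ∀ t ∈ Ico a b, ∀ᶠ z in 𝓝[>] t,
      ∀ ν : Measure E, IsFiniteMeasureOnCompacts ν →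
        ‖∫ x, (mollify φ (f z) x - mollify φ (f t) x +
            (z - t) * fderiv ℝ (mollify φ (f t)) x (v t x)) ∂ν‖ ≤
          κ * φ.rOut * (z - t) * ν.real (closedBall 0 (R + M * (b - a) + 1)) := by
  set R' := R + M * (b - a) + 1
  obtain ⟨L, hL⟩ := hv.exists_lipschitzOnWith (closedBall 0 (R' + 1)) (isCompact_closedBall _ _)
  obtain ⟨D, hD⟩ := hf.exists_lipschitzOnWith hv hC (R' + 2)
  have hM := hv.bound_nonneg hab
  have hfc : ∀ s ∈ Icc a b, Continuous (f s) := fun s hs ↦ hf.continuous hv hC hs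
  refine ⟨D * (L + 1) + M, by positivity, fun φ hφ t ht ↦ ?_⟩
  have ht' : t ∈ Icc a b := Ico_subset_Icc_self ht
  have hft : HasCompactSupport (f t) :=
    .of_support_subset_isCompact (isCompact_closedBall _ _) (hf.support_subset hv hR ht')
  filter_upwards [Ioo_mem_nhdsGT ht.2,
    hf.eventually_norm_mollify_sub_add_fderiv_le hv hfc hφ ht hft (hL t ht') (hD t ht')]
    with z hz hz_bound ν _
  have hsupp : ∀ s ∈ Icc a b, support (mollify φ (f s)) ⊆ closedBall 0 R' := fun s hs ↦
    hf.support_mollify_subset_closedBall hv hR hφ hs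
  refine norm_integral_le_mul_measureReal (isCompact_closedBall _ _).measure_lt_top ?_ hz_bound
  refine (support_add _ _).trans (union_subset ((support_sub _ _).trans
    (union_subset (hsupp z ⟨ht.1.trans hz.1.le, hz.2.le⟩) (hsupp t ht'))) ?_)
  exact (support_mul_subset_right _ _).trans ((support_fderiv_apply_subset _ _).trans
    (closure_minimal (hsupp t ht') isClosed_closedBall))

theorem exists_eventually_slope_integral_mollify_lt (hf : IsTransported v a b f)
    (hv : IsAdmissible v a b M) (hρ : IsWeakSolution v ρ a b) (hC : LipschitzWith C (f b))
    (hR : support (f b) ⊆ closedBall 0 R) (hab : a ≤ b) :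
    ∃ κ, ∀ φ : ContDiffBump (0 : E), φ.rOut ≤ 1 → ∀ t ∈ Ico a b, ∀ r, κ * φ.rOut < r →
      ∀ᶠ z in 𝓝[>] t, slope (fun s ↦ ∫ x, mollify φ (f s) x ∂ρ s) t z < r := by
  obtain ⟨κ, hκ, hcomm⟩ := hf.exists_norm_integral_mollify_sub_add_fderiv_le hv hC hR hab
  set K := closedBall (0 : E) (R + M * (b - a) + 1)
  have hK : IsCompact K := isCompact_closedBall _ _
  obtain ⟨m, hm⟩ := hρ.exists_measureReal_le isCompact_Icc hK
  refine ⟨κ * m, fun φ hφ t ht r hr ↦ ?_⟩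
  have ht' : t ∈ Icc a b := Ico_subset_Icc_self ht
  have hsmooth : ∀ s ∈ Icc a b, ContDiff ℝ ∞ (mollify φ (f s)) := fun s hs ↦
    contDiff_mollify (hf.continuous hv hC hs)
  have hcompact : ∀ s ∈ Icc a b, HasCompactSupport (mollify φ (f s)) := fun s hs ↦
    .of_support_subset_isCompact hK (hf.support_mollify_subset_closedBall hv hR hφ hs)
  have hslope := hρ.tendsto_slope_integral_sub hv.continuous_uncurry (hsmooth t ht')
    (hcompact t ht') ht
  filter_upwards [Ioo_mem_nhdsGT ht.2, hcomm φ hφ t ht,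
    hslope.eventually_lt_const (sub_pos.2 hr)] with z hz hz_comm hz_slope
  have hz' : z ∈ Icc a b := ⟨ht.1.trans hz.1.le, hz.2.le⟩
  have hzt : 0 < z - t := sub_pos.2 hz.1
  have := hρ.isFiniteMeasureOnCompacts z hz'
  have hint : ∀ s ∈ Icc a b, Integrable (mollify φ (f s)) (ρ z) := fun s hs ↦
    (hsmooth s hs).continuous.integrable_of_hasCompactSupport (hcompact s hs)
  have hflux : Integrable (fun x ↦ fderiv ℝ (mollify φ (f t)) x (v t x)) (ρ z) :=
    (((hsmooth t ht').continuous_fderiv (by simp)).clm_apply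
      (hv.continuous_uncurry.uncurry_left t)).integrable_of_hasCompactSupport
        (hasCompactSupport_fderiv_apply (hcompact t ht') _)
  have hz_bound := (Real.le_norm_self _).trans ((hz_comm (ρ z) this).trans
    (mul_le_mul_of_nonneg_left (hm z hz') (by have := φ.rOut_pos; positivity)))
  rw [integral_add (f := fun x ↦ mollify φ (f z) x - mollify φ (f t) x)
    ((hint z hz').sub (hint t ht')) (hflux.const_mul _), integral_sub (hint z hz') (hint t ht'),
    integral_const_mul] at hz_bound
  rw [slope_def_field, sub_lt_iff_lt_add, div_lt_iff₀ hzt] at hz_slope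
  rw [slope_def_field, div_lt_iff₀ hzt]
  linarith

theorem exists_integral_mollify_right_le (hf : IsTransported v a b f) (hv : IsAdmissible v a b M)
    (hρ : IsWeakSolution v ρ a b) (hC : LipschitzWith C (f b))
    (hR : support (f b) ⊆ closedBall 0 R) (hab : a ≤ b) :
    ∃ κ, ∀ φ : ContDiffBump (0 : E), φ.rOut ≤ 1 →
      ∫ x, mollify φ (f b) x ∂ρ b ≤ ∫ x, mollify φ (f a) x ∂ρ a + κ * φ.rOut * (b - a) := by
  obtain ⟨κ, hκ⟩ := hf.exists_eventually_slope_integral_mollify_lt hv hρ hC hR hab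
  refine ⟨κ, fun φ hφ ↦ ?_⟩
  have hcont : ContinuousOn (fun s ↦ ∫ x, mollify φ (f s) x ∂ρ s) (Icc a b) :=
    hρ.continuousOn_integral_of_support_subset isCompact_Icc (isCompact_closedBall _ _)
      (continuousOn_uncurry_mollify (hf.continuousOn_uncurry hv hC) (isCompact_closedBall _ _)
        fun t ht ↦ hf.support_subset hv hR ht)
      fun t ht ↦ hf.support_mollify_subset_closedBall hv hR hφ ht
  refine image_le_of_liminf_slope_right_le_deriv_boundary
    (B := fun s ↦ ∫ x, mollify φ (f a) x ∂ρ a + κ * φ.rOut * (s - a)) (B' := fun _ ↦ κ * φ.rOut)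
    hcont (by simp) (by fun_prop) (fun t _ ↦ ?_)
    (fun t ht r hr ↦ (hκ φ hφ t ht r hr).frequently) ⟨hab, le_rfl⟩
  simpa using ((((hasDerivAt_id t).sub_const a).const_mul (κ * φ.rOut)).const_add
    (∫ x, mollify φ (f a) x ∂ρ a)).hasDerivWithinAt

theorem integral_right_le (hf : IsTransported v a b f) (hv : IsAdmissible v a b M)
    (hρ : IsWeakSolution v ρ a b) (hC : LipschitzWith C (f b)) (hfb : HasCompactSupport (f b))
    (hab : a ≤ b) : ∫ x, f b x ∂ρ b ≤ ∫ x, f a x ∂ρ a := by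
  obtain ⟨R, hR⟩ := hfb.isCompact.isBounded.subset_closedBall (0 : E)
  replace hR := (subset_tsupport (f b)).trans hR
  obtain ⟨κ, hκ⟩ := hf.exists_integral_mollify_right_le hv hρ hC hR hab
  have hlim : ∀ t ∈ Icc a b, Tendsto (fun n ↦ ∫ x, mollify (shrinkingBump E n) (f t) x ∂ρ t) atTop
      (𝓝 (∫ x, f t x ∂ρ t)) := fun t ht ↦ by
    have := hρ.isFiniteMeasureOnCompacts t ht
    exact tendsto_integral_mollify (tendsto_rOut_shrinkingBump E) _ (hf.continuous hv hC ht)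
      (.of_support_subset_isCompact (isCompact_closedBall _ _) (hf.support_subset hv hR ht))
  have hrOut := tendsto_rOut_shrinkingBump E
  refine le_of_tendsto_of_tendsto (hlim b ⟨hab, le_rfl⟩)
    (by simpa using (hlim a ⟨le_rfl, hab⟩).add ((hrOut.const_mul κ).mul_const (b - a))) ?_
  filter_upwards [hrOut.eventually_le_const one_pos] with n hn using hκ _ hn

theorem integral_right_eq (hf : IsTransported v a b f) (hv : IsAdmissible v a b M)
    (hρ : IsWeakSolution v ρ a b) (hC : LipschitzWith C (f b)) (hfb : HasCompactSupport (f b))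
    (hab : a ≤ b) : ∫ x, f b x ∂ρ b = ∫ x, f a x ∂ρ a := by
  refine le_antisymm (hf.integral_right_le hv hρ hC hfb hab) ?_
  simpa only [integral_neg, neg_le_neg_iff] using
    hf.neg.integral_right_le hv hρ (C := C) hC.neg hfb.neg hab

end IsTransported

end Duality

section Flow

variable {E : Type*} [NormedAddCommGroup E] [NormedSpace ℝ E] [FiniteDimensional ℝ E]
  {v : ℝ → E → E} {a b M : ℝ} {Φ : E → ℝ → E}

theorem IsAdmissible.continuous_flow (hv : IsAdmissible v a b M) (hab : a ≤ b)
    (hΦ_left : ∀ x, Φ x a = x) (hΦ : ∀ x, IsIntegralCurveOn (Φ x) v (Icc a b)) :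
    Continuous fun x ↦ Φ x b := by
  refine continuous_iff_continuousAt.2 fun x ↦ ?_
  obtain ⟨C, hC⟩ := hv.exists_dist_right_le (‖x‖ + 1)
  have hlip : LipschitzOnWith C (fun y ↦ Φ y b) (closedBall 0 (‖x‖ + 1)) :=
    .of_dist_le_mul fun y hy z hz ↦ by
      simpa only [hΦ_left] using hC a ⟨le_rfl, hab⟩ (Φ y) (Φ z) (hΦ y) (hΦ z)
        (by rwa [hΦ_left]) (by rwa [hΦ_left])
  exact hlip.continuousOn.continuousAt (closedBall_mem_nhds_of_mem (by simp))

variable [MeasurableSpace E] [BorelSpace E]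

theorem IsAdmissible.isFiniteMeasureOnCompacts_map_flow (hv : IsAdmissible v a b M) (hab : a ≤ b)
    (hΦ_left : ∀ x, Φ x a = x) (hΦ : ∀ x, IsIntegralCurveOn (Φ x) v (Icc a b)) (ν : Measure E)
    [IsFiniteMeasureOnCompacts ν] : IsFiniteMeasureOnCompacts (ν.map fun x ↦ Φ x b) := by
  refine ⟨fun K hK ↦ ?_⟩
  obtain ⟨R, hR⟩ := hK.isBounded.subset_closedBall (0 : E)
  rw [Measure.map_apply (hv.continuous_flow hab hΦ_left hΦ).measurable hK.measurableSet]
  refine (measure_mono fun x hx ↦ ?_).trans_lt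
    (isCompact_closedBall (0 : E) (R + M * (b - a))).measure_lt_top
  have hΦx := hR hx
  rw [mem_closedBall_zero_iff] at hΦx ⊢
  have hx_le := hv.norm_integralCurve_le (hΦ x) (s := b) (t := a) ⟨hab, le_rfl⟩ ⟨le_rfl, hab⟩
  rw [hΦ_left] at hx_le
  linarith

theorem IsWeakSolution.map_flow_eq {ρ : ℝ → Measure E} (hρ : IsWeakSolution v ρ a b)
    (hv : IsAdmissible v a b M) (hab : a ≤ b) (hΦ_left : ∀ x, Φ x a = x)
    (hΦ : ∀ x, IsIntegralCurveOn (Φ x) v (Icc a b)) : (ρ a).map (fun x ↦ Φ x b) = ρ b := by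
  have ha : a ∈ Icc a b := ⟨le_rfl, hab⟩
  have hb : b ∈ Icc a b := ⟨hab, le_rfl⟩
  have := hρ.isFiniteMeasureOnCompacts a ha
  have := hρ.isFiniteMeasureOnCompacts b hb
  have := hv.isFiniteMeasureOnCompacts_map_flow hab hΦ_left hΦ (ρ a)
  refine measure_eq_of_integral_eq_of_lipschitzWith fun ψ C hC hψc ↦ ?_
  obtain ⟨f, hf, rfl⟩ := hv.exists_isTransported hab ψ
  calc ∫ x, f b x ∂(ρ a).map (fun x ↦ Φ x b)
      = ∫ x, f b (Φ x b) ∂ρ a := integral_map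
        (hv.continuous_flow hab hΦ_left hΦ).aemeasurable hC.continuous.aestronglyMeasurable
    _ = ∫ x, f a x ∂ρ a := by
        congr with x
        rw [hf (Φ x) (hΦ x) b hb a ha, hΦ_left]
    _ = ∫ x, f b x ∂ρ b := (hf.integral_right_eq hv hρ hC hψc hab).symm

theorem continuity_equation_solution_is_flow_pushforward_general {ρ : ℝ → Measure E}
    (hv : IsAdmissible v a b M) (hΦ_left : ∀ x, Φ x a = x)
    (hΦ : ∀ x, IsIntegralCurveOn (Φ x) v (Icc a b)) (hρ : IsWeakSolution v ρ a b) {t : ℝ}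
    (ht : t ∈ Icc a b) : MeasurePreserving (fun x ↦ Φ x t) (ρ a) (ρ t) := by
  have hsub : Icc a t ⊆ Icc a b := Icc_subset_Icc_right ht.2
  exact ⟨((hv.mono_right ht.2).continuous_flow ht.1 hΦ_left fun x ↦ (hΦ x).mono hsub).measurable,
    (hρ.mono_right ht.2).map_flow_eq (hv.mono_right ht.2) ht.1 hΦ_left fun x ↦ (hΦ x).mono hsub⟩

end Flow

/-- uniqueness of weak solutions of the continuity equation for an admissible
velocity field: a narrowly continuous curve of probability measures starting at `μ` and
solving `∂_t ρ + ∇·(ρ v) = 0` weakly coincides with the flow-map pushforward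
`ρ_t = (Φ(·,t))_#μ`, hence `∫‖v(·,t)‖² dρ_t = ∫‖v(Φ(x,t),t)‖² dμ`. -/
theorem continuity_equation_solution_is_flow_pushforward {d : ℕ}
    (v : EuclideanSpace ℝ (Fin d) → ℝ → EuclideanSpace ℝ (Fin d))
    (hcont : Continuous (Function.uncurry v))
    (M : ℝ) (hM : ∀ x t, ‖v x t‖ ≤ M)
    (hlip : ∀ K : Set (EuclideanSpace ℝ (Fin d)), IsCompact K →
      ∃ L : ℝ, ∀ t ∈ Icc (0 : ℝ) 1, ∀ x ∈ K, ∀ y ∈ K,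
        ‖v x t - v y t‖ ≤ L * ‖x - y‖)
    (Φ : EuclideanSpace ℝ (Fin d) → ℝ → EuclideanSpace ℝ (Fin d))
    (hΦ0 : ∀ x, Φ x 0 = x)
    (hΦ : ∀ x, ∀ t ∈ Icc (0 : ℝ) 1,
      HasDerivWithinAt (Φ x) (v (Φ x t) t) (Icc (0 : ℝ) 1) t)
    (μ : Measure (EuclideanSpace ℝ (Fin d))) [IsProbabilityMeasure μ]
    (hμ2 : Integrable (fun x => ‖x‖ ^ 2) μ)
    (ρ : ℝ → Measure (EuclideanSpace ℝ (Fin d)))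
    (hρprob : ∀ t ∈ Icc (0 : ℝ) 1, IsProbabilityMeasure (ρ t))
    (hρ0 : ρ 0 = μ)
    (hnarrow : ∀ φ : EuclideanSpace ℝ (Fin d) → ℝ, Continuous φ →
      (∃ B : ℝ, ∀ y, |φ y| ≤ B) →
      ContinuousOn (fun t => ∫ y, φ y ∂(ρ t)) (Icc (0 : ℝ) 1))
    (hCE : ∀ φ : EuclideanSpace ℝ (Fin d) → ℝ, ContDiff ℝ ((⊤ : ℕ∞) : WithTop ℕ∞) φ → HasCompactSupport φ →
      ∀ t ∈ Icc (0 : ℝ) 1,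
        (∫ y, φ y ∂(ρ t)) - (∫ y, φ y ∂μ) =
          ∫ r in (0 : ℝ)..t, ∫ y, ⟪gradient φ y, v y r⟫ ∂(ρ r)) :
    ∀ t ∈ Icc (0 : ℝ) 1,
      ρ t = μ.map (fun x => Φ x t) ∧
      ∫ y, ‖v y t‖ ^ 2 ∂(ρ t) = ∫ x, ‖v (Φ x t) t‖ ^ 2 ∂μ := by
  subst hρ0
  have hv : IsAdmissible (fun t x ↦ v x t) 0 1 M :=
    { continuous_uncurry := hcont.comp continuous_swap
      norm_le := fun t _ x ↦ hM x t
      exists_lipschitzOnWith := fun K hK ↦ (hlip K hK).imp' Real.toNNReal fun L hL t ht ↦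
        LipschitzOnWith.of_dist_le' fun x hx y hy ↦ by
          simpa only [dist_eq_norm] using hL t ht x hx y hy }
  have hρ : IsWeakSolution (fun t x ↦ v x t) ρ 0 1 :=
    { isFiniteMeasureOnCompacts := fun t ht ↦ have := hρprob t ht; inferInstance
      continuousOn_integral := fun φ hφ hφc ↦ hnarrow φ hφ (hφc.exists_bound_of_continuous hφ)
      integral_sub_integral := fun φ hφ hφc t ht ↦ by
        simpa only [inner_gradient_left] using hCE φ hφ hφc t ht }
  intro t ht
  have hmap := continuity_equation_solution_is_flow_pushforward_general hv hΦ0 hΦ hρ ht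
  refine ⟨hmap.map_eq.symm, ?_⟩
  rw [← hmap.map_eq]
  exact integral_map hmap.aemeasurable
    ((hcont.uncurry_right t).norm.pow 2).aestronglyMeasurable
end

section
/- Let H be a real Hilbert space, f : H → ℝ a function bounded below by m ∈ ℝ, and α > 0. Let (x_ℓ)_{ℓ ≥ 0} and (y_ℓ)_{ℓ ≥ 0} be sequences in H such that for every ℓ: (i) y_ℓ is a minimizer of z ↦ f(z) + (1/(2α))‖z − x_ℓ‖², and (ii) f(x_{ℓ+1}) ≤ f(y_ℓ). Then for every K ≥ 1, min_{0 ≤ ℓ < K} ‖y_ℓ − x_ℓ‖² ≤ 2α ( f(x₀) − m ) / K. -/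
theorem exists_lt_le_sub_div_of_le_sub_succ {𝕜 : Type*} [Field 𝕜] [LinearOrder 𝕜]
    [IsStrictOrderedRing 𝕜] {a g : ℕ → 𝕜} {K : ℕ} (hK : 0 < K)
    (h : ∀ n < K, g n ≤ a n - a (n + 1)) : ∃ n < K, g n ≤ (a 0 - a K) / K := by
  have sum_le : ∑ n ∈ Finset.range K, g n ≤ ∑ _n ∈ Finset.range K, (a 0 - a K) / K := calc
    ∑ n ∈ Finset.range K, g n
      ≤ ∑ n ∈ Finset.range K, (a n - a (n + 1)) :=
        Finset.sum_le_sum fun n hn ↦ h n (Finset.mem_range.mp hn)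
    _ = a 0 - a K := Finset.sum_range_sub' a K
    _ = ∑ _n ∈ Finset.range K, (a 0 - a K) / K := by
        rw [Finset.sum_const, Finset.card_range, nsmul_eq_mul,
          mul_div_cancel₀ _ (Nat.cast_ne_zero.mpr hK.ne')]
  simpa only [Finset.mem_range] using
    Finset.exists_le_of_sum_le (Finset.nonempty_range_iff.mpr hK.ne') sum_le

section ProximalPoint

variable {X : Type*} [PseudoMetricSpace X] {f : X → ℝ} {α : ℝ}

/-- `p` is a proximal point of `f` at `x` with step size `α`, i.e. `p ∈ prox_{αf}(x)`. This is a
predicate because, for a general `f`, minimizers need neither exist nor be unique. -/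
def IsProximalPoint (f : X → ℝ) (α : ℝ) (x p : X) : Prop :=
  IsMinOn (fun z ↦ f z + 1 / (2 * α) * dist z x ^ 2) Set.univ p

theorem IsProximalPoint.sq_dist_le {x p : X} (h : IsProximalPoint f α x p) (hα : 0 < α) :
    dist p x ^ 2 ≤ 2 * α * (f x - f p) := by
  have energy_le : f p + 1 / (2 * α) * dist p x ^ 2 ≤ f x := by
    simpa using isMinOn_univ_iff.mp h x
  rw [← div_le_iff₀' (by positivity), div_eq_inv_mul, ← one_div]
  linarith

theorem proximal_scheme_sublinear_rate_general (hα : 0 < α) {x y : ℕ → X} {K : ℕ} (hK : 0 < K)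
    (hprox : ∀ ℓ < K, IsProximalPoint f α (x ℓ) (y ℓ))
    (hdec : ∀ ℓ < K, f (x (ℓ + 1)) ≤ f (y ℓ)) :
    ∃ ℓ < K, dist (y ℓ) (x ℓ) ^ 2 ≤ 2 * α * (f (x 0) - f (x K)) / K := by
  simp only [mul_sub]
  refine exists_lt_le_sub_div_of_le_sub_succ (a := fun ℓ ↦ 2 * α * f (x ℓ)) hK fun ℓ hℓ ↦ ?_
  calc dist (y ℓ) (x ℓ) ^ 2
    _ ≤ 2 * α * (f (x ℓ) - f (y ℓ)) := (hprox ℓ hℓ).sq_dist_le hα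
    _ ≤ 2 * α * (f (x ℓ) - f (x (ℓ + 1))) := by gcongr; exact hdec ℓ hℓ
    _ = 2 * α * f (x ℓ) - 2 * α * f (x (ℓ + 1)) := mul_sub _ _ _

end ProximalPoint

/-- sublinear convergence of the inexact proximal scheme: if each `y_ℓ`
minimizes `z ↦ f(z) + (1/(2α))‖z − x_ℓ‖²` and `f(x_{ℓ+1}) ≤ f(y_ℓ)`, with `f ≥ m`,
then `min_{ℓ < K} ‖y_ℓ − x_ℓ‖² ≤ 2α(f(x₀) − m)/K`. -/
theorem proximal_scheme_sublinear_rate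
    {H : Type*} [NormedAddCommGroup H] [InnerProductSpace ℝ H] [CompleteSpace H]
    (f : H → ℝ) (m : ℝ) (hm : ∀ x : H, m ≤ f x)
    (α : ℝ) (hα : 0 < α) (x y : ℕ → H)
    (hmin : ∀ ℓ : ℕ, ∀ z : H,
      f (y ℓ) + 1 / (2 * α) * ‖y ℓ - x ℓ‖ ^ 2 ≤ f z + 1 / (2 * α) * ‖z - x ℓ‖ ^ 2)
    (hdec : ∀ ℓ : ℕ, f (x (ℓ + 1)) ≤ f (y ℓ))
    (K : ℕ) (hK : 1 ≤ K) :
    ∃ ℓ : ℕ, ℓ < K ∧ ‖y ℓ - x ℓ‖ ^ 2 ≤ 2 * α * (f (x 0) - m) / K := by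
  obtain ⟨ℓ, hℓ, hle⟩ := proximal_scheme_sublinear_rate_general hα hK
    (fun ℓ _ ↦ isMinOn_univ_iff.mpr (by simpa only [dist_eq_norm] using hmin ℓ)) fun ℓ _ ↦ hdec ℓ
  exact ⟨ℓ, hℓ, dist_eq_norm (y ℓ) (x ℓ) ▸ hle.trans (by gcongr; exact hm (x K))⟩
end

section
/- Let H be a real Hilbert space, λ > 0, and let f : H → ℝ be lower semicontinuous and λ-strongly convex, i.e. x ↦ f(x) − (λ/2)‖x‖² is convex. Let x* be a minimizer of f on H, fix α > 0 and x ∈ H, and let p be a minimizer of y ↦ f(y) + (1/(2α))‖y − x‖². Then (1 + 2λα) ‖p − x*‖² + ‖p − x‖² ≤ ‖x − x*‖². In particular ‖p − x*‖² ≤ ‖x − x*‖² / (1 + 2λα). -/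
open Set

/-!
Strong convexity along the segment from a minimizer `z` to `y`, after division by the parameter `t`
and passage to the limit `t → 0`, gives the quadratic growth `f z + m / 2 * ‖y - z‖ ^ 2 ≤ f y`; this
replaces the first-order optimality conditions. The proximal objective `y ↦ f y + c * ‖y - x‖ ^ 2`
is strongly convex with constant `m + 2 * c`. Adding its growth at `p`, evaluated at the minimizer
of `f`, to the growth of `f` at its minimizer, evaluated at `p`, cancels the values of `f`.
-/

open Filter Topology

section NormedSpace

variable {E : Type*} [NormedAddCommGroup E] [NormedSpace ℝ E] {s : Set E} {f g : E → ℝ}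

lemma uniformConvexOn_mul_le_sub_of_isMinOn {φ : ℝ → ℝ} (hf : UniformConvexOn s φ f) {y z : E}
    (hz : z ∈ s) (hmin : IsMinOn f s z) (hy : y ∈ s) {t : ℝ} (ht₀ : 0 < t) (ht₁ : t ≤ 1) :
    (1 - t) * φ ‖y - z‖ ≤ f y - f z := by
  have ht : 0 ≤ 1 - t := sub_nonneg.2 ht₁
  have hconv : f (t • y + (1 - t) • z) ≤ t * f y + (1 - t) * f z - t * (1 - t) * φ ‖y - z‖ :=
    hf.2 hy hz ht₀.le ht (add_sub_cancel t 1)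
  have hle : f z ≤ f (t • y + (1 - t) • z) :=
    hmin (hf.1 hy hz ht₀.le ht (add_sub_cancel t 1))
  refine le_of_mul_le_mul_left ?_ ht₀
  linarith

lemma uniformConvexOn_add_le_of_isMinOn {φ : ℝ → ℝ} (hf : UniformConvexOn s φ f) {y z : E}
    (hz : z ∈ s) (hmin : IsMinOn f s z) (hy : y ∈ s) : f z + φ ‖y - z‖ ≤ f y := by
  have hlim : Tendsto (fun t : ℝ ↦ (1 - t) * φ ‖y - z‖) (𝓝[>] 0) (𝓝 (φ ‖y - z‖)) := by
    have hcont : Continuous fun t : ℝ ↦ (1 - t) * φ ‖y - z‖ := by fun_prop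
    simpa using (hcont.tendsto 0).mono_left nhdsWithin_le_nhds
  have hgrowth : φ ‖y - z‖ ≤ f y - f z := by
    refine le_of_tendsto hlim ?_
    filter_upwards [Ioc_mem_nhdsGT zero_lt_one] with t ⟨ht₀, ht₁⟩
    exact uniformConvexOn_mul_le_sub_of_isMinOn hf hz hmin hy ht₀ ht₁
  linarith

lemma strongConvexOn_add {m n : ℝ} (hf : StrongConvexOn s m f) (hg : StrongConvexOn s n g) :
    StrongConvexOn s (m + n) (f + g) :=
  UniformConvexOn.mono (fun r ↦ le_of_eq (by simp only [Pi.add_apply]; ring))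
    (UniformConvexOn.add hf hg)

end NormedSpace

section InnerProductSpace

variable {H : Type*} [NormedAddCommGroup H] [InnerProductSpace ℝ H] {s : Set H} {f : H → ℝ}
  {m c : ℝ} {x p z : H}

lemma strongConvexOn_mul_norm_sub_sq (hs : Convex ℝ s) (c : ℝ) (x : H) :
    StrongConvexOn s (2 * c) fun y ↦ c * ‖y - x‖ ^ 2 := by
  have haffine : (fun y ↦ c * ‖y - x‖ ^ 2 - 2 * c / 2 * ‖y‖ ^ 2) =
      fun y ↦ (-(2 * c) • innerₛₗ ℝ x) y + c * ‖x‖ ^ 2 := by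
    ext y
    simp only [norm_sub_sq_real, LinearMap.smul_apply, innerₛₗ_apply_apply, smul_eq_mul,
      real_inner_comm x y]
    ring
  rw [strongConvexOn_iff_convex, haffine]
  exact (LinearMap.convexOn _ hs).add_const _

lemma proximal_three_point (hf : StrongConvexOn s m f) (hp : p ∈ s)
    (hprox : IsMinOn (fun y ↦ f y + c * ‖y - x‖ ^ 2) s p) (hz : z ∈ s) :
    f p + c * ‖p - x‖ ^ 2 + (m / 2 + c) * ‖z - p‖ ^ 2 ≤ f z + c * ‖z - x‖ ^ 2 := by
  have hgrowth : f p + c * ‖p - x‖ ^ 2 + (m + 2 * c) / 2 * ‖z - p‖ ^ 2 ≤ f z + c * ‖z - x‖ ^ 2 :=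
    uniformConvexOn_add_le_of_isMinOn
      (strongConvexOn_add hf (strongConvexOn_mul_norm_sub_sq hf.1 c x)) hp hprox hz
  linarith

lemma proximal_distance_inequality (hf : StrongConvexOn s m f) (hz : z ∈ s) (hmin : IsMinOn f s z)
    (hp : p ∈ s) (hprox : IsMinOn (fun y ↦ f y + c * ‖y - x‖ ^ 2) s p) :
    (m + c) * ‖p - z‖ ^ 2 + c * ‖p - x‖ ^ 2 ≤ c * ‖x - z‖ ^ 2 := by
  have hgrowth : f z + m / 2 * ‖p - z‖ ^ 2 ≤ f p := uniformConvexOn_add_le_of_isMinOn hf hz hmin hp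
  have hthree := proximal_three_point hf hp hprox hz
  rw [norm_sub_rev z p, norm_sub_rev z x] at hthree
  linarith

theorem proximal_step_contraction_general {α : ℝ} (hf : StrongConvexOn s m f)
    (hz : z ∈ s) (hmin : IsMinOn f s z) (hα : 0 < α) (hmα : 0 < 1 + 2 * m * α) (hp : p ∈ s)
    (hprox : IsMinOn (fun y ↦ f y + 1 / (2 * α) * ‖y - x‖ ^ 2) s p) :
    (1 + 2 * m * α) * ‖p - z‖ ^ 2 + ‖p - x‖ ^ 2 ≤ ‖x - z‖ ^ 2 ∧
    ‖p - z‖ ^ 2 ≤ ‖x - z‖ ^ 2 / (1 + 2 * m * α) := by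
  have hdist : (1 + 2 * m * α) * ‖p - z‖ ^ 2 + ‖p - x‖ ^ 2 ≤ ‖x - z‖ ^ 2 := by
    have hscaled := proximal_distance_inequality hf hz hmin hp hprox
    field_simp at hscaled
    linarith
  refine ⟨hdist, (le_div_iff₀' hmα).2 ?_⟩
  linarith [sq_nonneg ‖p - x‖]

end InnerProductSpace

/-- one-step contraction of the proximal map of a `λ`-strongly convex lsc
function towards its minimizer:
`(1 + 2λα)‖p − x*‖² + ‖p − x‖² ≤ ‖x − x*‖²`, hence
`‖p − x*‖² ≤ ‖x − x*‖²/(1 + 2λα)`. -/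
theorem proximal_step_contraction
    {H : Type*} [NormedAddCommGroup H] [InnerProductSpace ℝ H] [CompleteSpace H]
    (lam : ℝ) (hlam : 0 < lam) (f : H → ℝ)
    (hlsc : LowerSemicontinuous f)
    (hsc : ConvexOn ℝ univ (fun x => f x - lam / 2 * ‖x‖ ^ 2))
    (xs : H) (hxs : ∀ y : H, f xs ≤ f y)
    (α : ℝ) (hα : 0 < α) (x p : H)
    (hp : ∀ y : H,
      f p + 1 / (2 * α) * ‖p - x‖ ^ 2 ≤ f y + 1 / (2 * α) * ‖y - x‖ ^ 2) :
    (1 + 2 * lam * α) * ‖p - xs‖ ^ 2 + ‖p - x‖ ^ 2 ≤ ‖x - xs‖ ^ 2 ∧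
    ‖p - xs‖ ^ 2 ≤ ‖x - xs‖ ^ 2 / (1 + 2 * lam * α) :=
  proximal_step_contraction_general (strongConvexOn_iff_convex.2 hsc) (mem_univ xs)
    (fun y _ ↦ hxs y) hα (by positivity) (mem_univ p) fun y _ ↦ hp y
end

section
/- Under the Lagrangian flow data assumptions, fix t ∈ [0,1] with ∫ ‖V(x,t)‖² dμ(x) < ∞ and let v_t be the flow-matched vector field for time t, i.e. the ρ_t-a.e. unique field with ∫‖v_t‖² dρ_t < ∞ satisfying ∫ ⟨ψ(y), v_t(y)⟩ dρ_t(y) = ∫ ⟨ψ(X_t(x)), V(x,t)⟩ dμ(x) for all ψ ∈ L²(ρ_t). Then v_t ∘ X_t is a version of the conditional expectation of the Lagrangian velocity given the position: v_t ∘ X_t = 𝔼_μ[ V(·,t) | σ(X_t) ] μ-almost everywhere, where σ(X_t) is the sub-σ-algebra of Borel sets pulled back by X_t (the σ-algebra generated by X_t). -/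
open MeasureTheory Set
open scoped RealInnerProductSpace

/-! For random variables `Y`, `Z` and a field `w` matched to them, testing the matching identity
against `ψ = 𝟙_B c` equates the inner products of `c` with `∫_B w d(Y_#μ)` and `∫_{Y⁻¹ B} Z dμ`.
Letting `c` vary identifies the two vectors, and letting `B` vary gives the defining property of
`μ[Z | σ(Y)]`, because `σ(Y)` consists of the sets `Y⁻¹ B`. -/

section

variable {Ω α E : Type*} {mΩ : MeasurableSpace Ω} {mα : MeasurableSpace α} {μ : Measure Ω}
  [NormedAddCommGroup E]

theorem integrable_of_integrable_norm_sq [IsFiniteMeasure μ] {f : Ω → E}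
    (hf : AEStronglyMeasurable f μ) (hf2 : Integrable (fun x => ‖f x‖ ^ 2) μ) :
    Integrable f μ :=
  ((memLp_two_iff_integrable_sq_norm hf).2 hf2).integrable one_le_two

theorem integrable_norm_sq_indicator_const {s : Set Ω} (hs : MeasurableSet s) (hμs : μ s < ⊤)
    (c : E) : Integrable (fun x => ‖s.indicator (fun _ => c) x‖ ^ 2) μ := by
  have hmem : MemLp (s.indicator fun _ => c) 2 μ := memLp_indicator_const 2 hs c (.inr hμs.ne)
  exact (memLp_two_iff_integrable_sq_norm hmem.aestronglyMeasurable).1 hmem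

theorem comp_ae_eq_condExp_comap_of_forall_setIntegral_map_eq [NormedSpace ℝ E] [CompleteSpace E]
    {Y : Ω → α} {Z : Ω → E} {w : α → E} (hY : Measurable Y) [SigmaFinite (μ.trim hY.comap_le)]
    (hZ : Integrable Z μ) (hw : Integrable w (μ.map Y))
    (heq : ∀ B, MeasurableSet B → μ.map Y B < ⊤ →
      ∫ y in B, w y ∂(μ.map Y) = ∫ x in Y ⁻¹' B, Z x ∂μ) :
    (fun x => w (Y x)) =ᵐ[μ] μ[Z | mα.comap Y] := by
  refine ae_eq_condExp_of_forall_setIntegral_eq hY.comap_le hZ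
    (fun _ _ _ => (hw.comp_measurable hY).integrableOn) ?_
    (hw.aestronglyMeasurable.comp_ae_measurable' hY.aemeasurable)
  rintro _ ⟨B, hB, rfl⟩ hμB
  rw [← heq B hB (by rwa [Measure.map_apply hY hB]),
    setIntegral_map hB hw.aestronglyMeasurable hY.aemeasurable]

variable {𝕜 : Type*} [RCLike 𝕜] [InnerProductSpace 𝕜 E] [NormedSpace ℝ E] [CompleteSpace E]

theorem integral_inner_indicator_const {s : Set Ω} (hs : MeasurableSet s) {f : Ω → E}
    (hf : IntegrableOn f s μ) (c : E) :
    ∫ x, inner 𝕜 (s.indicator (fun _ => c) x) (f x) ∂μ = inner 𝕜 c (∫ x in s, f x ∂μ) := by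
  have hpointwise (x : Ω) : inner 𝕜 (s.indicator (fun _ => c) x) (f x) =
      s.indicator (fun x => inner 𝕜 c (f x)) x := by
    by_cases hx : x ∈ s <;> simp [hx]
  simp_rw [hpointwise]
  rw [integral_indicator hs, integral_inner hf]

theorem flow_matched_is_conditional_expectation_general
    {Y : Ω → α} {Z : Ω → E} {w : α → E} (hY : Measurable Y) [SigmaFinite (μ.trim hY.comap_le)]
    (hZ : Integrable Z μ) (hw : Integrable w (μ.map Y))
    (hmatch : ∀ B, MeasurableSet B → μ.map Y B < ⊤ → ∀ c : E,
      ∫ y, inner 𝕜 (B.indicator (fun _ => c) y) (w y) ∂(μ.map Y) =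
        ∫ x, inner 𝕜 (B.indicator (fun _ => c) (Y x)) (Z x) ∂μ) :
    (fun x => w (Y x)) =ᵐ[μ] μ[Z | mα.comap Y] := by
  refine comp_ae_eq_condExp_comap_of_forall_setIntegral_map_eq hY hZ hw fun B hB hB_fin =>
    ext_inner_left 𝕜 fun c => ?_
  calc inner 𝕜 c (∫ y in B, w y ∂(μ.map Y))
      = ∫ y, inner 𝕜 (B.indicator (fun _ => c) y) (w y) ∂(μ.map Y) :=
        (integral_inner_indicator_const hB hw.integrableOn c).symm
    _ = ∫ x, inner 𝕜 ((Y ⁻¹' B).indicator (fun _ => c) x) (Z x) ∂μ := hmatch B hB hB_fin c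
    _ = inner 𝕜 c (∫ x in Y ⁻¹' B, Z x ∂μ) :=
        integral_inner_indicator_const (hY hB) hZ.integrableOn c

end

/-- the flow-matched vector field composed with the position map,
`v_t ∘ X_t`, is a version of the conditional expectation of the Lagrangian velocity
given the position: `v_t ∘ X_t = 𝔼_μ[V(·,t) | σ(X_t)]` μ-a.e. -/
theorem flow_matched_is_conditional_expectation {d : ℕ}
    (μ : Measure (EuclideanSpace ℝ (Fin d))) [IsProbabilityMeasure μ]
    (hμ2 : Integrable (fun x => ‖x‖ ^ 2) μ)
    (X V : EuclideanSpace ℝ (Fin d) → ℝ → EuclideanSpace ℝ (Fin d))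
    (hXm : Measurable (Function.uncurry X))
    (hVm : Measurable (Function.uncurry V))
    (hflow : ∀ᵐ x ∂μ, X x 0 = x ∧
      ∀ t ∈ Icc (0 : ℝ) 1, X x t = x + ∫ s in (0 : ℝ)..t, V x s)
    (hE : Integrable (fun x => ∫ s in (0 : ℝ)..1, ‖V x s‖ ^ 2) μ)
    (t : ℝ) (ht : t ∈ Icc (0 : ℝ) 1)
    (hVt : Integrable (fun x => ‖V x t‖ ^ 2) μ)
    (vt : EuclideanSpace ℝ (Fin d) → EuclideanSpace ℝ (Fin d))
    (hvtm : Measurable vt)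
    (hvt2 : Integrable (fun y => ‖vt y‖ ^ 2) (μ.map (fun x => X x t)))
    (hmatch : ∀ ψ : EuclideanSpace ℝ (Fin d) → EuclideanSpace ℝ (Fin d), Measurable ψ →
      Integrable (fun y => ‖ψ y‖ ^ 2) (μ.map (fun x => X x t)) →
      ∫ y, ⟪ψ y, vt y⟫ ∂(μ.map (fun x => X x t)) = ∫ x, ⟪ψ (X x t), V x t⟫ ∂μ) :
    (fun x => vt (X x t)) =ᵐ[μ]
      μ[(fun x => V x t) |
        MeasurableSpace.comap (fun x => X x t)
          (inferInstance : MeasurableSpace (EuclideanSpace ℝ (Fin d)))] := by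
  exact flow_matched_is_conditional_expectation_general (𝕜 := ℝ) hXm.of_uncurry_right
    (integrable_of_integrable_norm_sq hVm.of_uncurry_right.aestronglyMeasurable hVt)
    (integrable_of_integrable_norm_sq hvtm.aestronglyMeasurable hvt2) fun B hB hB_fin c =>
      hmatch _ (measurable_const.indicator hB) (integrable_norm_sq_indicator_const hB hB_fin c)
end
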